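/- Let G ⊆ ℝ³ be open and simply connected, f : G → ℝ a positive C² function, and W = W₀ + 𝐖 : G → ℍ(ℝ) a C¹ solution of DW = (Df/f)·W̄, where W̄ = W₀ − 𝐖. Then: (a) div(f·𝐖) = 0 on G; (b) f^{-1}·rot(f·𝐖) + f·grad(f^{-1}·W₀) = 0 on G; and consequently (c) div(f²·grad(f^{-1}W₀)) = 0 and (d) rot(f^{-2}·rot(f·𝐖)) = 0 on G. -/

import Mathlib

open Quaternion

/-- Partial derivatives of real-valued functions on `ℝ³`. -/
noncomputable def rpd1 (F : ℝ × ℝ × ℝ → ℝ) (p : ℝ × ℝ × ℝ) : ℝ :=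
  deriv (fun t => F (t, p.2.1, p.2.2)) p.1

noncomputable def rpd2 (F : ℝ × ℝ × ℝ → ℝ) (p : ℝ × ℝ × ℝ) : ℝ :=
  deriv (fun t => F (p.1, t, p.2.2)) p.2.1

noncomputable def rpd3 (F : ℝ × ℝ × ℝ → ℝ) (p : ℝ × ℝ × ℝ) : ℝ :=
  deriv (fun t => F (p.1, p.2.1, t)) p.2.2

/-- Partial derivatives of quaternion-valued functions on `ℝ³`. -/
noncomputable def hpd1 (F : ℝ × ℝ × ℝ → ℍ[ℝ]) (p : ℝ × ℝ × ℝ) : ℍ[ℝ] :=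
  deriv (fun t => F (t, p.2.1, p.2.2)) p.1

noncomputable def hpd2 (F : ℝ × ℝ × ℝ → ℍ[ℝ]) (p : ℝ × ℝ × ℝ) : ℍ[ℝ] :=
  deriv (fun t => F (p.1, t, p.2.2)) p.2.1

noncomputable def hpd3 (F : ℝ × ℝ × ℝ → ℍ[ℝ]) (p : ℝ × ℝ × ℝ) : ℍ[ℝ] :=
  deriv (fun t => F (p.1, p.2.1, t)) p.2.2

/-- The quaternion imaginary units. -/
def qi : ℍ[ℝ] := ⟨0, 1, 0, 0⟩
def qj : ℍ[ℝ] := ⟨0, 0, 1, 0⟩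
def qk : ℍ[ℝ] := ⟨0, 0, 0, 1⟩

/-- The Moisil–Teodorescu (Dirac) operator `D = i∂_x + j∂_y + k∂_z`. -/
noncomputable def Dr (F : ℝ × ℝ × ℝ → ℍ[ℝ]) (p : ℝ × ℝ × ℝ) : ℍ[ℝ] :=
  qi * hpd1 F p + qj * hpd2 F p + qk * hpd3 F p

/-- Quaternionic conjugation `W̄ = W₀ − 𝐖`. -/
def qconjR (a : ℍ[ℝ]) : ℍ[ℝ] := ⟨a.re, -a.imI, -a.imJ, -a.imK⟩

/-- Divergence of a vector field on `ℝ³` given by components. -/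
noncomputable def vdiv (v₁ v₂ v₃ : ℝ × ℝ × ℝ → ℝ) (p : ℝ × ℝ × ℝ) : ℝ :=
  rpd1 v₁ p + rpd2 v₂ p + rpd3 v₃ p

/-- The three components of the curl of a vector field on `ℝ³`. -/
noncomputable def curl1 (v₁ v₂ v₃ : ℝ × ℝ × ℝ → ℝ) (p : ℝ × ℝ × ℝ) : ℝ :=
  rpd2 v₃ p - rpd3 v₂ p

noncomputable def curl2 (v₁ v₂ v₃ : ℝ × ℝ × ℝ → ℝ) (p : ℝ × ℝ × ℝ) : ℝ :=
  rpd3 v₁ p - rpd1 v₃ p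

noncomputable def curl3 (v₁ v₂ v₃ : ℝ × ℝ × ℝ → ℝ) (p : ℝ × ℝ × ℝ) : ℝ :=
  rpd1 v₂ p - rpd2 v₁ p

/-!
In scalar and vector parts, with `u = f⁻¹ W₀` and `v = f 𝐖`, the Vekua equation says that
`div v = 0` and `rot v = -f² grad u`. Formally, (c) and (d) follow by applying `div` to the second
identity and `rot` to `f⁻² rot v = -grad u`, but `u` is only known to be `C¹`. The identity
`rot v = -f² grad u` exhibits `f² grad u` as weakly divergence free, so `u` is a weak solution of
the conductivity equation, and elliptic regularity shows that it is `C²`.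
-/

namespace QuaternionicVekua

section

open MeasureTheory Filter Topology Metric Set
open scoped ContDiff NNReal

section Kernel

/-- The profile `s ↦ s ^ (-d / 2)`, smoothly cut off near `0`: outside the unit ball the field
`x ↦ cutoffPow d (‖x‖ ^ 2) • x` is the divergence-free field `x / ‖x‖ ^ d` of `ℝ ^ d`. -/
noncomputable def cutoffPow (d : ℕ) (s : ℝ) : ℝ :=
  Real.smoothTransition (2 * s - 1) * s ^ (-(d / 2) : ℝ)

variable {d : ℕ} {s : ℝ}

lemma cutoffPow_of_le_half (hs : s ≤ 1 / 2) : cutoffPow d s = 0 := by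
  simp [cutoffPow, Real.smoothTransition.zero_of_nonpos (show 2 * s - 1 ≤ 0 by linarith)]

lemma cutoffPow_of_one_le (hs : 1 ≤ s) : cutoffPow d s = s ^ (-(d / 2) : ℝ) := by
  simp [cutoffPow, Real.smoothTransition.one_of_one_le (show 1 ≤ 2 * s - 1 by linarith)]

lemma cutoffPow_eventuallyEq_zero (hs : s < 1 / 2) : cutoffPow d =ᶠ[𝓝 s] fun _ => 0 := by
  filter_upwards [eventually_lt_nhds hs] with t ht using cutoffPow_of_le_half ht.le

lemma contDiff_cutoffPow : ContDiff ℝ ∞ (cutoffPow d) := by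
  refine contDiff_iff_contDiffAt.2 fun s => ?_
  rcases lt_or_ge s (1 / 2) with hs | hs
  · exact contDiffAt_const.congr_of_eventuallyEq (cutoffPow_eventuallyEq_zero hs)
  · have hθ : ContDiff ℝ ∞ fun s : ℝ => Real.smoothTransition (2 * s - 1) :=
      Real.smoothTransition.contDiff.comp (by fun_prop)
    exact hθ.contDiffAt.mul (Real.contDiffAt_rpow_const_of_ne (by linarith))

lemma two_pow_mul_cutoffPow_four_mul (hs : 1 ≤ s) :
    2 ^ d * cutoffPow d (4 * s) = cutoffPow d s := by
  have h4 : (4 : ℝ) ^ (-(d / 2) : ℝ) = (2 ^ d)⁻¹ := by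
    rw [show (4 : ℝ) = 2 ^ (2 : ℝ) by norm_num, ← Real.rpow_mul (by norm_num),
      show (2 * -(d / 2) : ℝ) = -d by ring, Real.rpow_neg (by norm_num), Real.rpow_natCast]
  rw [cutoffPow_of_one_le hs, cutoffPow_of_one_le (by linarith),
    Real.mul_rpow (by norm_num) (by linarith), h4, mul_inv_cancel_left₀ (by positivity)]

/-- The function `cutoffDiv d (‖x‖ ^ 2)` is twice the divergence of `cutoffPow d (‖x‖ ^ 2) • x` on
`ℝ ^ d`. -/
noncomputable def cutoffDiv (d : ℕ) (s : ℝ) : ℝ :=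
  2 * d * cutoffPow d s + 4 * s * deriv (cutoffPow d) s

lemma contDiff_cutoffDiv : ContDiff ℝ ∞ (cutoffDiv d) := by
  have hderiv : ContDiff ℝ ∞ (deriv (cutoffPow d)) :=
    (contDiff_infty_iff_deriv.1 contDiff_cutoffPow).2
  exact (contDiff_const.mul contDiff_cutoffPow).add
    ((contDiff_const.mul contDiff_id).mul hderiv)

lemma cutoffDiv_eq_deriv_smoothTransition (hs : 0 < s) :
    cutoffDiv d s =
      4 * deriv (fun t : ℝ => Real.smoothTransition (2 * t - 1)) s * (s * s ^ (-(d / 2) : ℝ)) := by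
  have hθ : DifferentiableAt ℝ (fun t : ℝ => Real.smoothTransition (2 * t - 1)) s :=
    ((Real.smoothTransition.contDiff (n := 1)).comp (by fun_prop)).differentiable (by simp) s
  have hP := hθ.hasDerivAt.mul (Real.hasDerivAt_rpow_const (p := -(d / 2)) (Or.inl hs.ne'))
  have hderiv : deriv (cutoffPow d) s = _ := hP.deriv
  rw [cutoffDiv, hderiv, Real.rpow_sub_one hs.ne', cutoffPow]
  field_simp
  ring

lemma cutoffDiv_of_lt_half (hs : s < 1 / 2) : cutoffDiv d s = 0 := by
  simp [cutoffDiv, (cutoffPow_eventuallyEq_zero hs).deriv_eq, cutoffPow_of_le_half hs.le]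

lemma cutoffDiv_of_one_le (hs : 1 ≤ s) : cutoffDiv d s = 0 := by
  have hmax : IsLocalMax (fun t : ℝ => Real.smoothTransition (2 * t - 1)) s :=
    Eventually.of_forall fun t => by
      simpa [Real.smoothTransition.one_of_one_le (show 1 ≤ 2 * s - 1 by linarith)]
        using Real.smoothTransition.le_one (2 * t - 1)
  simp [cutoffDiv_eq_deriv_smoothTransition (show 0 < s by linarith), hmax.deriv_eq_zero]

lemma cutoffDiv_nonneg : 0 ≤ cutoffDiv d s := by
  rcases lt_or_ge s (1 / 2) with hs | hs
  · exact (cutoffDiv_of_lt_half hs).ge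
  · have hmono : Monotone fun t : ℝ => Real.smoothTransition (2 * t - 1) := fun a b h =>
      Real.smoothTransition.monotone (by linarith)
    have hs0 : 0 < s := by linarith
    have := hmono.deriv_nonneg (x := s)
    rw [cutoffDiv_eq_deriv_smoothTransition hs0]
    positivity

lemma exists_cutoffDiv_ne_zero (d : ℕ) : ∃ s, 0 < s ∧ cutoffDiv d s ≠ 0 := by
  have hθ : Differentiable ℝ fun t : ℝ => Real.smoothTransition (2 * t - 1) :=
    ((Real.smoothTransition.contDiff (n := 1)).comp (by fun_prop)).differentiable (by simp)
  obtain ⟨c, hc, hslope⟩ := exists_deriv_eq_slope _ (show (1 / 2 : ℝ) < 1 by norm_num)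
    hθ.continuous.continuousOn hθ.differentiableOn
  have hc0 : 0 < c := by linarith [hc.1]
  refine ⟨c, hc0, ?_⟩
  rw [cutoffDiv_eq_deriv_smoothTransition hc0, hslope,
    Real.smoothTransition.one_of_one_le (by norm_num),
    Real.smoothTransition.zero_of_nonpos (by norm_num)]
  positivity

/-- The compactly supported primitive of `s ↦ 2 ^ d * cutoffPow d (4 * s) - cutoffPow d s`. -/
noncomputable def cutoffPrimitive (d : ℕ) (s : ℝ) : ℝ :=
  ∫ t in (1 : ℝ)..s, (2 ^ d * cutoffPow d (4 * t) - cutoffPow d t)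

lemma contDiff_two_pow_mul_cutoffPow_sub :
    ContDiff ℝ ∞ fun t => 2 ^ d * cutoffPow d (4 * t) - cutoffPow d t := by
  have h := contDiff_cutoffPow (d := d)
  fun_prop

lemma hasDerivAt_cutoffPrimitive :
    HasDerivAt (cutoffPrimitive d) (2 ^ d * cutoffPow d (4 * s) - cutoffPow d s) s :=
  intervalIntegral.integral_hasDerivAt_right
    (contDiff_two_pow_mul_cutoffPow_sub.continuous.intervalIntegrable _ _)
    contDiff_two_pow_mul_cutoffPow_sub.continuous.aestronglyMeasurable.stronglyMeasurableAtFilter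
    contDiff_two_pow_mul_cutoffPow_sub.continuous.continuousAt

lemma deriv_cutoffPrimitive :
    deriv (cutoffPrimitive d) = fun s => 2 ^ d * cutoffPow d (4 * s) - cutoffPow d s :=
  funext fun _ => hasDerivAt_cutoffPrimitive.deriv

lemma contDiff_cutoffPrimitive : ContDiff ℝ ∞ (cutoffPrimitive d) := by
  rw [contDiff_infty_iff_deriv, deriv_cutoffPrimitive]
  exact ⟨fun _ => hasDerivAt_cutoffPrimitive.differentiableAt, contDiff_two_pow_mul_cutoffPow_sub⟩

lemma cutoffPrimitive_of_one_le (hs : 1 ≤ s) : cutoffPrimitive d s = 0 := by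
  rw [cutoffPrimitive, intervalIntegral.integral_congr (g := fun _ => 0)]
  · simp
  · intro t ht
    rw [uIcc_of_le hs] at ht
    simp [two_pow_mul_cutoffPow_four_mul ht.1]

lemma deriv_deriv_cutoffPrimitive :
    2 * d * deriv (cutoffPrimitive d) s + 4 * s * deriv (deriv (cutoffPrimitive d)) s =
      2 ^ d * cutoffDiv d (4 * s) - cutoffDiv d s := by
  have hP (t : ℝ) : HasDerivAt (cutoffPow d) (deriv (cutoffPow d) t) t :=
    (contDiff_cutoffPow.differentiable (by simp) t).hasDerivAt
  have hP4 : HasDerivAt (fun t => cutoffPow d (4 * t)) (deriv (cutoffPow d) (4 * s) * 4) s := by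
    simpa [Function.comp_def] using (hP (4 * s)).comp s ((hasDerivAt_id s).const_mul 4)
  rw [deriv_cutoffPrimitive, ((hP4.const_mul (2 ^ d)).fun_sub (hP s)).deriv, cutoffDiv, cutoffDiv]
  ring

end Kernel

section Laplacian

variable {E ι : Type*} [NormedAddCommGroup E] [NormedSpace ℝ E]

lemma contDiff_fderiv_apply {n m : ℕ∞ω} {F : E → ℝ} (hF : ContDiff ℝ n F) (hmn : m + 1 ≤ n)
    (w : E) : ContDiff ℝ m fun x => fderiv ℝ F x w :=
  (hF.fderiv_right hmn).clm_apply contDiff_const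

variable [Fintype ι]

/-- The Laplacian `∑ ∂ᵢ∂ᵢ` in the coordinates of a basis of `E` (not assumed orthonormal for the
norm of `E`, which need not be Euclidean). -/
noncomputable def laplacian (b : Module.Basis ι ℝ E) (φ : E → ℝ) (x : E) : ℝ :=
  ∑ i, fderiv ℝ (fun y => fderiv ℝ φ y (b i)) x (b i)

/-- The square of the Euclidean norm for which the basis `b` is orthonormal. -/
noncomputable def sqNorm (b : Module.Basis ι ℝ E) (x : E) : ℝ :=
  ∑ i, b.equivFunL x i ^ 2

variable {b : Module.Basis ι ℝ E} {k : ℝ → ℝ} {x : E}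

lemma sqNorm_smul (c : ℝ) : sqNorm b (c • x) = c ^ 2 * sqNorm b x := by
  simp [sqNorm, Finset.mul_sum, mul_pow]

lemma contDiff_sqNorm {n : ℕ∞ω} : ContDiff ℝ n (sqNorm b) := by
  unfold sqNorm
  fun_prop

omit [Fintype ι] in
lemma hasFDerivAt_equivFunL_apply [Finite ι] (i : ι) : HasFDerivAt (fun y => b.equivFunL y i)
    ((ContinuousLinearMap.proj i).comp (b.equivFunL : E →L[ℝ] ι → ℝ)) x :=
  ((ContinuousLinearMap.proj i).comp (b.equivFunL : E →L[ℝ] ι → ℝ)).hasFDerivAt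

lemma fderiv_sqNorm_apply_basis (i : ι) : fderiv ℝ (sqNorm b) x (b i) = 2 * b.equivFunL x i := by
  classical
  have h : HasFDerivAt (sqNorm b) _ x := HasFDerivAt.fun_sum fun j (_ : j ∈ Finset.univ) =>
    (hasFDerivAt_equivFunL_apply (b := b) (x := x) j).pow 2
  simp [h.fderiv, Finsupp.single_apply]

lemma fderiv_comp_sqNorm_apply_basis (hk : DifferentiableAt ℝ k (sqNorm b x)) (i : ι) :
    fderiv ℝ (fun y => k (sqNorm b y)) x (b i) = deriv k (sqNorm b x) * (2 * b.equivFunL x i) := by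
  have h : HasFDerivAt (fun y => k (sqNorm b y)) _ x := hk.hasDerivAt.comp_hasFDerivAt x
    ((contDiff_sqNorm (n := 1)).differentiable (by simp) x).hasFDerivAt
  simp only [h.fderiv, smul_apply, smul_eq_mul, fderiv_sqNorm_apply_basis]

lemma laplacian_comp_sqNorm (hk : ContDiff ℝ 2 k) :
    laplacian b (fun y => k (sqNorm b y)) x =
      2 * Fintype.card ι * deriv k (sqNorm b x) +
        4 * sqNorm b x * deriv (deriv k) (sqNorm b x) := by
  have hk' : ContDiff ℝ 1 (deriv k) := hk.deriv'
  have hsecond (i : ι) : fderiv ℝ (fun y => fderiv ℝ (fun z => k (sqNorm b z)) y (b i)) x (b i) =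
      2 * deriv k (sqNorm b x) + 4 * deriv (deriv k) (sqNorm b x) * b.equivFunL x i ^ 2 := by
    have hfst : (fun y => fderiv ℝ (fun z => k (sqNorm b z)) y (b i)) =
        fun y => deriv k (sqNorm b y) * (2 * b.equivFunL y i) := funext fun y =>
      fderiv_comp_sqNorm_apply_basis (hk.differentiable (by simp) _) i
    have hdk := hk'.differentiable one_ne_zero (sqNorm b x)
    have hcomp : DifferentiableAt ℝ (fun y => deriv k (sqNorm b y)) x :=
      hdk.comp x (contDiff_sqNorm.differentiable one_ne_zero x)
    have hcoord := (hasFDerivAt_equivFunL_apply (b := b) (x := x) i).const_mul 2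
    rw [hfst, fderiv_fun_mul hcomp hcoord.differentiableAt, hcoord.fderiv]
    simp only [add_apply, smul_apply,
      ContinuousLinearMap.comp_apply, fderiv_comp_sqNorm_apply_basis hdk]
    simp
    ring
  simp only [laplacian, hsecond, Finset.sum_add_distrib, ← Finset.mul_sum, Finset.sum_const,
    Finset.card_univ, nsmul_eq_mul, ← sqNorm.eq_1]
  ring

lemma hasCompactSupport_comp_sqNorm (hk : ∀ s, 1 ≤ s → k s = 0) :
    HasCompactSupport fun x => k (sqNorm b x) := by
  have : FiniteDimensional ℝ E := b.finiteDimensional_of_finite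
  have hcompact : IsCompact (b.equivFunL ⁻¹' closedBall 0 1) :=
    b.equivFunL.toHomeomorph.isCompact_preimage.2 (isCompact_closedBall 0 1)
  refine HasCompactSupport.intro hcompact fun x hx => hk _ (le_of_not_gt fun hlt => hx ?_)
  refine mem_closedBall_zero_iff.2 ((pi_norm_le_iff_of_nonneg zero_le_one).2 fun i => ?_)
  rw [Real.norm_eq_abs, ← sq_le_one_iff_abs_le_one]
  exact (Finset.single_le_sum (fun j _ => sq_nonneg (b.equivFunL x j)) (Finset.mem_univ i)).trans
    hlt.le

lemma laplacian_const_mul {φ : E → ℝ} (hφ : ContDiff ℝ 2 φ) (c : ℝ) :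
    laplacian b (fun y => c * φ y) x = c * laplacian b φ x := by
  have hd := hφ.differentiable two_ne_zero
  have hd' (i : ι) : DifferentiableAt ℝ (fun y => fderiv ℝ φ y (b i)) x :=
    (contDiff_fderiv_apply (m := 1) hφ le_rfl (b i)).differentiable one_ne_zero x
  simp [laplacian, fderiv_const_mul, hd _, hd', Finset.mul_sum]

/-- The telescoping kernel: `κ` is a compactly supported solution of the Poisson equation whose
right-hand side is the difference of two dilates of one probability density. -/
theorem exists_laplacian_eq_dilate_sub [MeasurableSpace E] [BorelSpace E] [Nonempty ι]
    (b : Module.Basis ι ℝ E) (μ : Measure E) [μ.IsAddHaarMeasure] :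
    ∃ κ ρ : E → ℝ, ContDiff ℝ ∞ κ ∧ HasCompactSupport κ ∧ ContDiff ℝ ∞ ρ ∧ HasCompactSupport ρ ∧
      (∀ x, 0 ≤ ρ x) ∧ ∫ x, ρ x ∂μ = 1 ∧
      ∀ x, laplacian b κ x = 2 ^ Fintype.card ι * ρ ((2 : ℝ) • x) - ρ x := by
  have : FiniteDimensional ℝ E := b.finiteDimensional_of_finite
  set d := Fintype.card ι
  have hk : ContDiff ℝ ∞ fun x => cutoffPrimitive d (sqNorm b x) :=
    contDiff_cutoffPrimitive.comp contDiff_sqNorm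
  have hr : ContDiff ℝ ∞ fun x => cutoffDiv d (sqNorm b x) :=
    contDiff_cutoffDiv.comp contDiff_sqNorm
  have hrc : HasCompactSupport fun x => cutoffDiv d (sqNorm b x) :=
    hasCompactSupport_comp_sqNorm fun _ => cutoffDiv_of_one_le
  obtain ⟨s, hs, hsne⟩ := exists_cutoffDiv_ne_zero d
  set m := ∫ x, cutoffDiv d (sqNorm b x) ∂μ
  have hm : 0 < m := by
    let i : ι := Classical.arbitrary ι
    refine hr.continuous.integral_pos_of_hasCompactSupport_nonneg_nonzero (x := √s • b i) hrc
      (fun _ => cutoffDiv_nonneg) ?_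
    have : sqNorm b (b i) = 1 := by
      classical
      simp [sqNorm, Finsupp.single_apply]
    simpa [sqNorm_smul, this, Real.sq_sqrt hs.le] using hsne
  refine ⟨fun x => m⁻¹ * cutoffPrimitive d (sqNorm b x), fun x => m⁻¹ * cutoffDiv d (sqNorm b x),
    contDiff_const.mul hk,
    (hasCompactSupport_comp_sqNorm fun _ => cutoffPrimitive_of_one_le).mul_left,
    contDiff_const.mul hr, hrc.mul_left,
    fun _ => mul_nonneg (inv_nonneg.2 hm.le) cutoffDiv_nonneg, ?_, fun x => ?_⟩
  · rw [integral_const_mul, inv_mul_cancel₀ hm.ne']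
  · have h4 : sqNorm b ((2 : ℝ) • x) = 4 * sqNorm b x := by rw [sqNorm_smul]; norm_num
    rw [laplacian_const_mul (contDiff_infty.1 hk 2),
      laplacian_comp_sqNorm (contDiff_infty.1 contDiff_cutoffPrimitive 2),
      deriv_deriv_cutoffPrimitive]
    simp only [h4]
    ring

end Laplacian

section Holder

variable {X F : Type*} [PseudoMetricSpace X] [NormedAddCommGroup F] {α A C L : ℝ≥0}

lemma holderWith_of_dist_le {f : X → F}
    (h : ∀ x y, dist (f x) (f y) ≤ C * dist x y ^ (α : ℝ)) : HolderWith C α f := fun x y => by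
  rw [edist_dist, edist_dist,
    ENNReal.ofReal_rpow_of_nonneg (dist_nonneg (x := x) (y := y)) α.coe_nonneg,
    ← ENNReal.ofReal_coe_nnreal, ← ENNReal.ofReal_mul C.coe_nonneg]
  exact ENNReal.ofReal_le_ofReal (h x y)

lemma holderWith_zero_of_norm_le {f : X → F} (hA : ∀ x, ‖f x‖ ≤ A) : HolderWith (2 * A) 0 f :=
  holderWith_of_dist_le fun x y => by
    simpa [two_mul] using (dist_le_norm_add_norm _ _).trans (add_le_add (hA x) (hA y))

lemma holderWith_of_lipschitzWith_of_norm_le {f : X → F} (hL : LipschitzWith L f)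
    (hA : ∀ x, ‖f x‖ ≤ A) (hα : α ≤ 1) :
    HolderWith ((2 * A) ^ ((1 - α : ℝ≥0) : ℝ) * L ^ (α : ℝ)) α f := by
  simpa using (holderWith_zero_of_norm_le hA).interpolate (holderWith_one.2 hL)
    (tsub_add_cancel_of_le hα)

lemma holderWith_tsum {ι : Type*} {f : ι → X → F} {c : ι → ℝ≥0}
    (hf : ∀ i, HolderWith (c i) α (f i)) (hc : Summable c) (hs : ∀ x, Summable fun i => f i x) :
    HolderWith (∑' i, c i) α fun x => ∑' i, f i x :=
  holderWith_of_dist_le fun x y => by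
    rw [dist_eq_norm, ← (hs x).tsum_sub (hs y), NNReal.coe_tsum]
    refine tsum_of_norm_bounded ((NNReal.summable_coe.2 hc).hasSum.mul_right _) fun i => ?_
    rw [← dist_eq_norm]
    exact (hf i).dist_le x y

/-- Bounded Hölder continuous functions, the class in which the Hölder estimates are global and
stable under products. -/
structure BoundedHolder (α : ℝ≥0) (w : X → ℝ) : Prop where
  bounded : ∃ M : ℝ≥0, ∀ x, ‖w x‖ ≤ M
  memHolder : MemHolder α w

namespace BoundedHolder

variable {f g : X → ℝ}

lemma const (c : ℝ) : BoundedHolder α fun _ : X => c :=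
  ⟨⟨‖c‖₊, fun _ => le_rfl⟩, memHolder_const⟩

lemma add (hf : BoundedHolder α f) (hg : BoundedHolder α g) :
    BoundedHolder α fun x => f x + g x := by
  obtain ⟨⟨M, hM⟩, C, hC⟩ := hf
  obtain ⟨⟨N, hN⟩, D, hD⟩ := hg
  refine ⟨⟨M + N, fun x => ?_⟩, C + D, hC.add hD⟩
  exact (norm_add_le _ _).trans (add_le_add (hM x) (hN x))

lemma mul (hf : BoundedHolder α f) (hg : BoundedHolder α g) :
    BoundedHolder α fun x => f x * g x := by
  obtain ⟨⟨M, hM⟩, C, hC⟩ := hf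
  obtain ⟨⟨N, hN⟩, D, hD⟩ := hg
  refine ⟨⟨M * N, fun x => ?_⟩, M * D + C * N, holderWith_of_dist_le fun x y => ?_⟩
  · rw [norm_mul]
    exact mul_le_mul (hM x) (hN x) (norm_nonneg _) M.2
  · calc dist (f x * g x) (f y * g y)
        = ‖f x * (g x - g y) + (f x - f y) * g y‖ := by rw [dist_eq_norm]; ring_nf
      _ ≤ ‖f x‖ * dist (g x) (g y) + dist (f x) (f y) * ‖g y‖ := by
        rw [dist_eq_norm, dist_eq_norm, ← norm_mul, ← norm_mul]
        exact norm_add_le _ _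
      _ ≤ M * (D * dist x y ^ (α : ℝ)) + C * dist x y ^ (α : ℝ) * N := by
        gcongr
        exacts [hM x, hD.dist_le x y, hC.dist_le x y, hN y]
      _ = ((M * D + C * N : ℝ≥0) : ℝ) * dist x y ^ (α : ℝ) := by push_cast; ring

lemma of_lipschitzWith (hL : LipschitzWith L f) (hA : ∀ x, ‖f x‖ ≤ A) (hα : α ≤ 1) :
    BoundedHolder α f :=
  ⟨⟨A, hA⟩, (holderWith_of_lipschitzWith_of_norm_le hL hA hα).memHolder⟩

end BoundedHolder

end Holder

section Mollify

variable {E F : Type*} [NormedAddCommGroup E] [NormedSpace ℝ E] [MeasurableSpace E]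
  [NormedAddCommGroup F] [NormedSpace ℝ F] {μ : Measure E}

/-- The average of `g` against `η` at scale `h`; for `h ≠ 0` this is the convolution of `g` with
the dilate `y ↦ |h| ^ (-dim E) • η (y / h)`. -/
noncomputable def mollify (μ : Measure E) (h : ℝ) (η : E → F) (g : E → ℝ) (x : E) : F :=
  ∫ z, g (x - h • z) • η z ∂μ

variable {η : E → F} {g : E → ℝ} {h : ℝ}

lemma mollify_eq_convolution (hh : h ≠ 0) (x : E) :
    mollify μ h η g x =
      convolution η (fun y => g (h • y)) (ContinuousLinearMap.lsmul ℝ ℝ).flip μ (h⁻¹ • x) := by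
  simp [mollify, convolution, smul_sub, smul_inv_smul₀ hh]

variable [BorelSpace E]

lemma integrable_smul_of_hasCompactSupport [IsFiniteMeasureOnCompacts μ] (hη : Continuous η)
    (hηc : HasCompactSupport η) (hg : Continuous g) (x : E) :
    Integrable (fun z => g (x - h • z) • η z) μ :=
  (by fun_prop : Continuous fun z => g (x - h • z) • η z).integrable_of_hasCompactSupport
    hηc.smul_left

lemma norm_mollify_le [IsFiniteMeasureOnCompacts μ] (hη : Continuous η)
    (hηc : HasCompactSupport η) {M : ℝ} (hM : ∀ x, ‖g x‖ ≤ M) (x : E) :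
    ‖mollify μ h η g x‖ ≤ M * ∫ z, ‖η z‖ ∂μ := by
  rw [← integral_const_mul]
  refine norm_integral_le_of_norm_le
    ((hη.integrable_of_hasCompactSupport hηc).norm.const_mul M) (Eventually.of_forall fun z => ?_)
  rw [norm_smul]
  exact mul_le_mul_of_nonneg_right (hM _) (norm_nonneg _)

lemma norm_mul_mollify_le [IsFiniteMeasureOnCompacts μ] {η : E → ℝ} (hη : Continuous η)
    (hηc : HasCompactSupport η) {M : ℝ≥0} (hM : ∀ x, ‖g x‖ ≤ M) (h : ℝ≥0) (x : E) :
    ‖h * mollify μ h η g x‖ ≤ h * (M * (∫ z, ‖η z‖ ∂μ).toNNReal : ℝ≥0) := by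
  rw [norm_mul, Real.norm_of_nonneg h.coe_nonneg, NNReal.coe_mul,
    Real.coe_toNNReal _ (integral_nonneg fun _ => norm_nonneg _)]
  gcongr
  exact norm_mollify_le hη hηc hM x

/-- A kernel of mean zero only sees the oscillation of `g`, which gains the factor `h ^ α`. -/
lemma norm_mollify_le_of_holderWith [IsFiniteMeasureOnCompacts μ] (hη : Continuous η)
    (hηc : HasCompactSupport η) (hη0 : ∫ z, η z ∂μ = 0) {C α : ℝ≥0} (hg : HolderWith C α g)
    (hgc : Continuous g) (hh : 0 ≤ h) (x : E) :
    ‖mollify μ h η g x‖ ≤ h ^ (α : ℝ) * (C * ∫ z, ‖z‖ ^ (α : ℝ) * ‖η z‖ ∂μ) := by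
  have hcancel : mollify μ h η g x = ∫ z, (g (x - h • z) - g x) • η z ∂μ := by
    simp only [sub_smul]
    rw [integral_sub (integrable_smul_of_hasCompactSupport (h := h) hη hηc hgc x)
      ((hη.integrable_of_hasCompactSupport hηc).fun_smul (g x)), integral_smul, hη0, smul_zero,
      sub_zero, mollify]
  have hint : Integrable (fun z => ‖z‖ ^ (α : ℝ) * ‖η z‖) μ :=
    (by fun_prop (disch := simp) : Continuous _).integrable_of_hasCompactSupport hηc.norm.mul_left
  rw [hcancel, ← mul_assoc, ← integral_const_mul]
  refine norm_integral_le_of_norm_le (hint.const_mul _) (Eventually.of_forall fun z => ?_)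
  have hosc : ‖g (x - h • z) - g x‖ ≤ C * (h * ‖z‖) ^ (α : ℝ) := by
    simpa [dist_eq_norm, norm_smul, abs_of_nonneg hh] using hg.dist_le (x - h • z) x
  rw [Real.mul_rpow hh (norm_nonneg z)] at hosc
  calc ‖(g (x - h • z) - g x) • η z‖ ≤ C * (h ^ (α : ℝ) * ‖z‖ ^ (α : ℝ)) * ‖η z‖ := by
        rw [norm_smul]; gcongr
    _ = h ^ (α : ℝ) * C * (‖z‖ ^ (α : ℝ) * ‖η z‖) := by ring

lemma continuous_uncurry_mollify [IsFiniteMeasureOnCompacts μ] (hη : Continuous η)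
    (hηc : HasCompactSupport η) (hg : Continuous g) :
    Continuous fun p : ℝ × E => mollify μ p.1 η g p.2 := by
  refine continuousOn_univ.1 (continuousOn_integral_of_compact_support hηc
    (by fun_prop : Continuous _).continuousOn fun p z _ hz => ?_)
  rw [image_eq_zero_of_notMem_tsupport hz, smul_zero]

lemma continuous_mollify [IsFiniteMeasureOnCompacts μ] (hη : Continuous η)
    (hηc : HasCompactSupport η) (hg : Continuous g) (h : ℝ) : Continuous (mollify μ h η g) :=
  (continuous_uncurry_mollify hη hηc hg).comp (by fun_prop : Continuous fun x : E => (h, x))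

variable [FiniteDimensional ℝ E] [μ.IsAddHaarMeasure]

lemma hasFDerivAt_mul_mollify {η : E → ℝ} (hη : ContDiff ℝ 1 η) (hηc : HasCompactSupport η)
    (hg : Continuous g) (hh : h ≠ 0) (x : E) :
    HasFDerivAt (fun y => h * mollify μ h η g y) (mollify μ h (fderiv ℝ η) g x) x := by
  have hconv := hηc.hasFDerivAt_convolution_left (ContinuousLinearMap.lsmul ℝ ℝ).flip hη
    ((by fun_prop : Continuous fun y => g (h • y)).locallyIntegrable (μ := μ)) (h⁻¹ • x)
  have hscale : HasFDerivAt (fun y : E => h⁻¹ • y) (h⁻¹ • ContinuousLinearMap.id ℝ E) x :=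
    (hasFDerivAt_id x).const_smul h⁻¹
  have hcomp := (hconv.comp x hscale).const_mul h
  simp only [Function.comp_def, ← mollify_eq_convolution hh] at hcomp
  refine hcomp.congr_fderiv ?_
  rw [ContinuousLinearMap.comp_smul, smul_inv_smul₀ hh, ContinuousLinearMap.comp_id,
    mollify_eq_convolution hh]
  congr 1

lemma integral_fderiv_eq_zero {η : E → ℝ} (hη : ContDiff ℝ 1 η) (hηc : HasCompactSupport η) :
    ∫ z, fderiv ℝ η z ∂μ = 0 := by
  have h := hasFDerivAt_mul_mollify (μ := μ) hη hηc (continuous_const (y := 1)) one_ne_zero 0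
  simpa [mollify] using h.unique (by simpa [mollify] using hasFDerivAt_const _ 0)

lemma contDiff_mul_mollify {η : E → ℝ} (hη : ContDiff ℝ 1 η) (hηc : HasCompactSupport η)
    (hg : Continuous g) (hh : h ≠ 0) : ContDiff ℝ 1 fun x => h * mollify μ h η g x := by
  have hderiv := hasFDerivAt_mul_mollify (μ := μ) hη hηc hg hh
  refine contDiff_one_iff_fderiv.2 ⟨fun x => (hderiv x).differentiableAt, ?_⟩
  rw [funext fun x => (hderiv x).fderiv]
  exact continuous_mollify (hη.continuous_fderiv one_ne_zero) (hηc.fderiv ℝ) hg h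

lemma lipschitzWith_mul_mollify {η : E → ℝ} (hη : ContDiff ℝ 1 η) (hηc : HasCompactSupport η)
    (hg : Continuous g) {M : ℝ≥0} (hM : ∀ x, ‖g x‖ ≤ M) (hh : h ≠ 0) :
    LipschitzWith (M * (∫ z, ‖fderiv ℝ η z‖ ∂μ).toNNReal) fun x => h * mollify μ h η g x := by
  have hderiv := hasFDerivAt_mul_mollify (μ := μ) hη hηc hg hh
  refine lipschitzWith_of_nnnorm_fderiv_le (fun x => (hderiv x).differentiableAt) fun x => ?_
  rw [(hderiv x).fderiv, ← NNReal.coe_le_coe, coe_nnnorm, NNReal.coe_mul,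
    Real.coe_toNNReal _ (integral_nonneg fun _ => norm_nonneg _)]
  exact norm_mollify_le (hη.continuous_fderiv one_ne_zero) (hηc.fderiv ℝ) hM x

lemma contDiff_mollify {η : E → ℝ} (hη : ContDiff ℝ 1 η) (hηc : HasCompactSupport η)
    (hg : Continuous g) (hh : h ≠ 0) : ContDiff ℝ 1 (mollify μ h η g) := by
  simpa [inv_mul_cancel_left₀ hh] using
    (contDiff_const (c := h⁻¹)).mul (contDiff_mul_mollify (μ := μ) hη hηc hg hh)

lemma boundedHolder_mollify {η : E → ℝ} (hη : ContDiff ℝ 1 η) (hηc : HasCompactSupport η)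
    (hg : Continuous g) {M : ℝ≥0} (hM : ∀ x, ‖g x‖ ≤ M) {h α : ℝ≥0} (hh : h ≠ 0) (hα : α ≤ 1) :
    BoundedHolder α (mollify μ h η g) := by
  have hlip := lipschitzWith_mul_mollify (μ := μ) hη hηc hg hM (NNReal.coe_ne_zero.2 hh)
  have hscaled : BoundedHolder α fun x => h * mollify μ h η g x :=
    .of_lipschitzWith hlip (A := h * _) (norm_mul_mollify_le hη.continuous hηc hM h) hα
  simpa [inv_mul_cancel_left₀ (NNReal.coe_ne_zero.2 hh)] using
    (BoundedHolder.const (h : ℝ)⁻¹).mul hscaled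

end Mollify

section DyadicSeries

variable {E : Type*} [NormedAddCommGroup E] [NormedSpace ℝ E] [MeasurableSpace E]

/-- The sum of the averages of `g` against `η` over the dyadic scales `r / 2 ^ k`, weighted by the
scale. With `η` a derivative of a dyadic piece of the fundamental solution, this is the part of the
Newtonian potential of a derivative of `g` coming from distances up to `r`. -/
noncomputable def dyadicSeries (μ : Measure E) (η : E → ℝ) (g : E → ℝ) (r : ℝ≥0) (x : E) : ℝ :=
  ∑' k : ℕ, ((r / 2 ^ k : ℝ≥0) : ℝ) * mollify μ (r / 2 ^ k : ℝ≥0) η g x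

lemma summable_dyadic_rpow (r : ℝ≥0) {s : ℝ} (hs : 0 < s) :
    Summable fun k : ℕ => (r / 2 ^ k) ^ s := by
  have hterm (k : ℕ) : (r / 2 ^ k) ^ s = r ^ s * ((2 ^ s)⁻¹) ^ k := by
    rw [NNReal.div_rpow, div_eq_mul_inv, ← NNReal.rpow_natCast, ← NNReal.rpow_mul, inv_pow,
      ← NNReal.rpow_natCast (2 ^ s), ← NNReal.rpow_mul, mul_comm (k : ℝ)]
  simp only [hterm]
  exact (NNReal.summable_geometric
    (inv_lt_one_of_one_lt₀ (NNReal.one_lt_rpow one_lt_two hs))).mul_left _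

lemma summable_dyadic (r : ℝ≥0) : Summable fun k : ℕ => r / 2 ^ k := by
  simpa using summable_dyadic_rpow r one_pos

variable [BorelSpace E] {μ : Measure E} {η g : E → ℝ} {r α M : ℝ≥0}

lemma summable_mul_mollify [IsFiniteMeasureOnCompacts μ] (hη : Continuous η)
    (hηc : HasCompactSupport η) (hM : ∀ x, ‖g x‖ ≤ M) (r : ℝ≥0) (x : E) :
    Summable fun k : ℕ => ((r / 2 ^ k : ℝ≥0) : ℝ) * mollify μ (r / 2 ^ k : ℝ≥0) η g x :=
  .of_norm_bounded ((NNReal.summable_coe.2 (summable_dyadic r)).mul_right _)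
    fun k => norm_mul_mollify_le hη hηc hM (r / 2 ^ k) x

variable [FiniteDimensional ℝ E] [μ.IsAddHaarMeasure]

/-- The `k`-th term is of size `r / 2 ^ k` and uniformly Lipschitz; interpolating between the two
makes its `α`-Hölder constant summable for every `α < 1`. -/
lemma boundedHolder_dyadicSeries (hη : ContDiff ℝ 1 η) (hηc : HasCompactSupport η)
    (hg : Continuous g) (hM : ∀ x, ‖g x‖ ≤ M) (hr : r ≠ 0) (hα : α < 1) :
    BoundedHolder α (dyadicSeries μ η g r) := by
  set A := M * (∫ z, ‖η z‖ ∂μ).toNNReal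
  set L := M * (∫ z, ‖fderiv ℝ η z‖ ∂μ).toNNReal
  have hs := summable_dyadic r
  have hbound (k : ℕ) (x : E) := norm_mul_mollify_le (μ := μ) hη.continuous hηc hM (r / 2 ^ k) x
  refine ⟨⟨∑' k : ℕ, r / 2 ^ k * A, fun x => ?_⟩, _, holderWith_tsum
    (c := fun k => (r / 2 ^ k) ^ ((1 - α : ℝ≥0) : ℝ) * ((2 * A) ^ ((1 - α : ℝ≥0) : ℝ) *
      L ^ (α : ℝ))) (fun k => ?_)
    ((summable_dyadic_rpow r (by simpa using hα)).mul_right _)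
    (summable_mul_mollify hη.continuous hηc hM r)⟩
  · rw [NNReal.coe_tsum]
    exact tsum_of_norm_bounded (NNReal.summable_coe.2 (hs.mul_right A)).hasSum (hbound · x)
  · have hh : ((r / 2 ^ k : ℝ≥0) : ℝ) ≠ 0 := by positivity
    convert holderWith_of_lipschitzWith_of_norm_le (A := r / 2 ^ k * A)
      (lipschitzWith_mul_mollify hη hηc hg hM hh) (hbound k) hα.le using 1
    rw [mul_left_comm 2 (r / 2 ^ k) A, NNReal.mul_rpow (x := r / 2 ^ k), mul_assoc]

/-- Differentiating the `k`-th term loses its factor `r / 2 ^ k`, but the new kernel has mean zero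
and regains `(r / 2 ^ k) ^ α` from the Hölder continuity of `g`. -/
lemma contDiff_dyadicSeries (hη : ContDiff ℝ 1 η) (hηc : HasCompactSupport η)
    (hg : BoundedHolder α g) (hα : 0 < α) (hr : r ≠ 0) :
    ContDiff ℝ 1 (dyadicSeries μ η g r) := by
  obtain ⟨⟨M, hM⟩, C, hC⟩ := hg
  have hgc := hC.continuous hα
  have hη' : Continuous (fderiv ℝ η) := hη.continuous_fderiv one_ne_zero
  have hh (k : ℕ) : ((r / 2 ^ k : ℝ≥0) : ℝ) ≠ 0 := by positivity
  have hderiv (k : ℕ) (x : E) := hasFDerivAt_mul_mollify (μ := μ) hη hηc hgc (hh k) x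
  have hbound (k : ℕ) (x : E) := norm_mollify_le_of_holderWith hη' (hηc.fderiv ℝ)
    (integral_fderiv_eq_zero (μ := μ) hη hηc) hC hgc (r / 2 ^ k).coe_nonneg x
  have hsum : Summable fun k : ℕ => ((r / 2 ^ k : ℝ≥0) : ℝ) ^ (α : ℝ) *
      (C * ∫ z, ‖z‖ ^ (α : ℝ) * ‖fderiv ℝ η z‖ ∂μ) := by
    simpa using (NNReal.summable_coe.2 (summable_dyadic_rpow r (NNReal.coe_pos.2 hα))).mul_right _
  have hseries (x : E) := hasFDerivAt_tsum hsum hderiv hbound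
    (summable_mul_mollify hη.continuous hηc hM r 0) x
  refine contDiff_one_iff_fderiv.2 ⟨fun x => (hseries x).differentiableAt, ?_⟩
  rw [show fderiv ℝ (dyadicSeries μ η g r) = _ from funext fun x => (hseries x).fderiv]
  exact continuous_tsum (fun k => continuous_mollify hη' (hηc.fderiv ℝ) hgc _) hsum hbound

end DyadicSeries

section Representation

variable {E : Type*} [NormedAddCommGroup E] [NormedSpace ℝ E] {φ : E → ℝ} {h : ℝ}

lemma hasFDerivAt_comp_smul_sub (hφ : Differentiable ℝ φ) (h : ℝ) (x y : E) :
    HasFDerivAt (fun y => φ (h⁻¹ • (x - y))) (-h⁻¹ • fderiv ℝ φ (h⁻¹ • (x - y))) y := by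
  have hinner : HasFDerivAt (fun y : E => h⁻¹ • (x - y)) (h⁻¹ • -ContinuousLinearMap.id ℝ E) y :=
    ((hasFDerivAt_id y).const_sub x).const_smul h⁻¹
  refine ((hφ _).hasFDerivAt.comp y hinner).congr_fderiv ?_
  ext w
  simp

lemma fderiv_comp_smul_sub_apply (hφ : Differentiable ℝ φ) (h : ℝ) (x y w : E) :
    fderiv ℝ (fun y => φ (h⁻¹ • (x - y))) y w = -h⁻¹ * fderiv ℝ φ (h⁻¹ • (x - y)) w := by
  simp [(hasFDerivAt_comp_smul_sub hφ h x y).fderiv]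

lemma laplacian_comp_smul_sub {ι : Type*} [Fintype ι] (b : Module.Basis ι ℝ E)
    (hφ : ContDiff ℝ 2 φ) (h : ℝ) (x y : E) :
    laplacian b (fun y => φ (h⁻¹ • (x - y))) y = h⁻¹ ^ 2 * laplacian b φ (h⁻¹ • (x - y)) := by
  have hφ' (i : ι) : Differentiable ℝ fun z => fderiv ℝ φ z (b i) :=
    (contDiff_fderiv_apply (m := 1) hφ le_rfl (b i)).differentiable one_ne_zero
  simp only [laplacian, fderiv_comp_smul_sub_apply (hφ.differentiable two_ne_zero), Finset.mul_sum]
  refine Finset.sum_congr rfl fun i _ => ?_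
  rw [((hasFDerivAt_comp_smul_sub (hφ' i) h x y).const_mul (-h⁻¹)).fderiv]
  simp only [smul_apply, smul_eq_mul]
  ring

lemma tsupport_comp_smul_sub_subset {R : ℝ} (hh : 0 < h) (hR : tsupport φ ⊆ closedBall 0 R)
    (x : E) : tsupport (fun y => φ (h⁻¹ • (x - y))) ⊆ closedBall x (h * R) := by
  refine closure_minimal (fun y hy => ?_) isClosed_closedBall
  have hz := hR (subset_tsupport _ hy)
  rwa [mem_closedBall_zero_iff, norm_smul, norm_inv, Real.norm_of_nonneg hh.le,
    inv_mul_le_iff₀ hh, ← dist_eq_norm, dist_comm] at hz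

variable [MeasurableSpace E] [BorelSpace E] {μ : Measure E}

lemma tendsto_mollify_zero [IsFiniteMeasureOnCompacts μ] (hφ : Continuous φ)
    (hφc : HasCompactSupport φ) (hφ1 : ∫ z, φ z ∂μ = 1) {v : E → ℝ} (hv : Continuous v) (x : E) :
    Tendsto (fun h => mollify μ h φ v x) (𝓝 0) (𝓝 (v x)) := by
  have hcont : Continuous fun h : ℝ => mollify μ h φ v x :=
    (continuous_uncurry_mollify hφ hφc hv).comp (by fun_prop : Continuous fun h : ℝ => (h, x))
  simpa [mollify, integral_const_mul, hφ1] using hcont.tendsto 0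

variable [FiniteDimensional ℝ E] [μ.IsAddHaarMeasure]

lemma integral_comp_smul_sub_mul (hh : 0 < h) (v : E → ℝ) (x : E) :
    ∫ y, φ (h⁻¹ • (x - y)) * v y ∂μ = h ^ Module.finrank ℝ E * mollify μ h φ v x := by
  have hshift := integral_sub_left_eq_self (fun z => φ (h⁻¹ • z) * v (x - z)) μ x
  have hscale := Measure.integral_comp_smul μ (fun z => φ z * v (x - h • z)) h⁻¹
  simp only [sub_sub_cancel] at hshift
  simp only [smul_inv_smul₀ hh.ne'] at hscale
  rw [hshift, hscale, inv_pow, inv_inv, abs_of_pos (pow_pos hh _), smul_eq_mul, mollify]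
  simp only [smul_eq_mul, mul_comm]

lemma mollify_comp_two_smul (v : E → ℝ) (x : E) :
    2 ^ Module.finrank ℝ E * mollify μ h (fun z => φ ((2 : ℝ) • z)) v x =
      mollify μ (h / 2) φ v x := by
  have hscale := Measure.integral_comp_smul μ (fun z => v (x - (h / 2) • z) • φ z) 2
  simp only [smul_smul, div_mul_cancel₀ h two_ne_zero] at hscale
  rw [mollify, hscale, abs_of_pos (by positivity), smul_eq_mul,
    mul_inv_cancel_left₀ (by positivity), mollify]

/-- `v` is a weak solution on `U` of the Poisson equation `Δ v = -∂_w g`, where the Laplacian is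
that of the coordinates of `b`. -/
def IsWeakPoissonSolution {ι : Type*} [Fintype ι] (b : Module.Basis ι ℝ E) (μ : Measure E)
    (U : Set E) (w : E) (g v : E → ℝ) : Prop :=
  ∀ φ : E → ℝ, ContDiff ℝ ∞ φ → HasCompactSupport φ → tsupport φ ⊆ U →
    ∫ y, laplacian b φ y * v y ∂μ = ∫ y, fderiv ℝ φ y w * g y ∂μ

namespace IsWeakPoissonSolution

variable {ι : Type*} [Fintype ι] {b : Module.Basis ι ℝ E} {U : Set E} {w x p : E}
  {g v κ ρ : E → ℝ} {R : ℝ}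

/-- Test the equation with the dilate `y ↦ κ ((x - y) / h)`. -/
lemma mollify_half_sub_mollify (hsol : IsWeakPoissonSolution b μ U w g v) (hκ : ContDiff ℝ ∞ κ)
    (hρ : Continuous ρ) (hρc : HasCompactSupport ρ)
    (hκρ : ∀ x, laplacian b κ x = 2 ^ Fintype.card ι * ρ ((2 : ℝ) • x) - ρ x)
    (hR : tsupport κ ⊆ closedBall 0 R) (hv : Continuous v) (hh : 0 < h)
    (hU : closedBall x (h * R) ⊆ U) :
    mollify μ (h / 2) ρ v x - mollify μ h ρ v x =
      -(h * mollify μ h (fun z => fderiv ℝ κ z w) g x) := by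
  have hsupp := tsupport_comp_smul_sub_subset hh hR x
  have htest := hsol (fun y => κ (h⁻¹ • (x - y))) (hκ.comp (by fun_prop))
    ((isCompact_closedBall x (h * R)).of_isClosed_subset (isClosed_tsupport _) hsupp)
    (hsupp.trans hU)
  simp only [laplacian_comp_smul_sub b (contDiff_infty.1 hκ 2),
    fderiv_comp_smul_sub_apply (hκ.differentiable (by simp)), mul_assoc, integral_const_mul,
    integral_comp_smul_sub_mul (φ := laplacian b κ) hh,
    integral_comp_smul_sub_mul (φ := fun z => fderiv ℝ κ z w) hh] at htest
  have hlap : mollify μ h (laplacian b κ) v x = mollify μ (h / 2) ρ v x - mollify μ h ρ v x := by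
    have hρ2c : HasCompactSupport fun z => ρ ((2 : ℝ) • z) := hρc.comp_smul two_ne_zero
    have hρ2 : Continuous fun z => ρ ((2 : ℝ) • z) := by fun_prop
    rw [← mollify_comp_two_smul, Module.finrank_eq_card_basis b]
    simp only [mollify, hκρ, ← integral_const_mul]
    rw [← integral_sub ((integrable_smul_of_hasCompactSupport hρ2 hρ2c hv x).const_mul _)
      (integrable_smul_of_hasCompactSupport hρ hρc hv x)]
    simp only [smul_eq_mul]
    ring_nf
  rw [hlap] at htest
  have hpow : h ^ Module.finrank ℝ E ≠ 0 := by positivity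
  field_simp at htest ⊢
  linarith

lemma eq_mollify_sub_dyadicSeries (hsol : IsWeakPoissonSolution b μ U w g v)
    (hκ : ContDiff ℝ ∞ κ) (hκc : HasCompactSupport κ)
    (hρ : Continuous ρ) (hρc : HasCompactSupport ρ) (hρ1 : ∫ z, ρ z ∂μ = 1)
    (hκρ : ∀ x, laplacian b κ x = 2 ^ Fintype.card ι * ρ ((2 : ℝ) • x) - ρ x)
    (hR : tsupport κ ⊆ closedBall 0 R) (hR0 : 0 ≤ R) (hv : Continuous v)
    {M : ℝ≥0} (hM : ∀ y, ‖g y‖ ≤ M) {r : ℝ≥0} (hr : r ≠ 0) (hU : closedBall x (r * R) ⊆ U) :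
    v x = mollify μ r ρ v x - dyadicSeries μ (fun z => fderiv ℝ κ z w) g r x := by
  set m : ℕ → ℝ := fun k => mollify μ (r / 2 ^ k : ℝ≥0) ρ v x
  have hstep (k : ℕ) : ((r / 2 ^ k : ℝ≥0) : ℝ) *
      mollify μ (r / 2 ^ k : ℝ≥0) (fun z => fderiv ℝ κ z w) g x = m k - m (k + 1) := by
    have hle : r / 2 ^ k ≤ r := div_le_self zero_le (one_le_pow₀ one_le_two)
    have hdiff := hsol.mollify_half_sub_mollify hκ hρ hρc hκρ hR hv
      (NNReal.coe_pos.2 (by positivity : 0 < r / 2 ^ k))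
      ((closedBall_subset_closedBall (by gcongr)).trans hU)
    have hhalf : ((r / 2 ^ (k + 1) : ℝ≥0) : ℝ) = (r / 2 ^ k : ℝ≥0) / 2 := by
      push_cast; rw [pow_succ, div_div]
    simp only [m, hhalf]
    linarith
  have hscale : Tendsto (fun k : ℕ => ((r / 2 ^ k : ℝ≥0) : ℝ)) atTop (𝓝 0) :=
    (NNReal.summable_coe.2 (summable_dyadic r)).tendsto_atTop_zero
  have hm : Tendsto m atTop (𝓝 (v x)) := (tendsto_mollify_zero hρ hρc hρ1 hv x).comp hscale
  have hη : Continuous fun z => fderiv ℝ κ z w :=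
    (hκ.continuous_fderiv (by simp)).clm_apply continuous_const
  have hsum := (summable_mul_mollify (μ := μ) hη (hκc.fderiv_apply ℝ w) hM r
    x).hasSum.tendsto_sum_nat
  simp only [hstep, Finset.sum_range_sub'] at hsum
  have hlim := tendsto_nhds_unique hsum (hm.const_sub (m 0))
  have hm0 : m 0 = mollify μ r ρ v x := by simp [m]
  rw [dyadicSeries]
  simp only [hstep]
  linarith

/-- Near `p`, a solution is a smooth average of itself minus the potential of its right-hand
side. -/
lemma exists_eventuallyEq_mollify_sub_dyadicSeries [Nonempty ι] (hU : U ∈ 𝓝 p)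
    (hsol : IsWeakPoissonSolution b μ U w g v) (hv : Continuous v) {M : ℝ≥0}
    (hM : ∀ y, ‖g y‖ ≤ M) :
    ∃ (ρ η : E → ℝ) (r : ℝ≥0), ContDiff ℝ 1 ρ ∧ HasCompactSupport ρ ∧ ContDiff ℝ 1 η ∧
      HasCompactSupport η ∧ r ≠ 0 ∧
      v =ᶠ[𝓝 p] fun x => mollify μ r ρ v x - dyadicSeries μ η g r x := by
  obtain ⟨κ, ρ, hκ, hκc, hρ, hρc, -, hρ1, hκρ⟩ := exists_laplacian_eq_dilate_sub b μ
  obtain ⟨R, hR0, hR⟩ : ∃ R, 0 < R ∧ tsupport κ ⊆ closedBall 0 R :=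
    hκc.isCompact.isBounded.subset_closedBall_lt 0 0
  obtain ⟨δ, hδ, hball⟩ := nhds_basis_closedBall.mem_iff.1 hU
  refine ⟨ρ, fun z => fderiv ℝ κ z w, (δ / 2 / R).toNNReal, contDiff_infty.1 hρ 1, hρc,
    contDiff_fderiv_apply (contDiff_infty.1 hκ 2) le_rfl w,
    hκc.fderiv_apply ℝ w, by simpa using by positivity, ?_⟩
  filter_upwards [closedBall_mem_nhds p (half_pos hδ)] with x hx
  refine hsol.eq_mollify_sub_dyadicSeries hκ hκc hρ.continuous hρc hρ1 hκρ hR hR0.le hv hM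
    (by simpa using by positivity) ((closedBall_subset_closedBall' ?_).trans hball)
  rw [Real.coe_toNNReal _ (by positivity), div_mul_cancel₀ _ hR0.ne']
  linarith [mem_closedBall.1 hx]

end IsWeakPoissonSolution

end Representation

section Regularity

lemma exists_norm_le_of_hasCompactSupport {X : Type*} [TopologicalSpace X] {F : X → ℝ}
    (hF : Continuous F) (hFc : HasCompactSupport F) : ∃ M : ℝ≥0, ∀ x, ‖F x‖ ≤ M := by
  obtain ⟨A, hA⟩ := hFc.exists_bound_of_continuous hF
  exact ⟨A.toNNReal, fun x => (hA x).trans (Real.le_coe_toNNReal A)⟩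

variable {E : Type*} [NormedAddCommGroup E] [NormedSpace ℝ E]

lemma boundedHolder_of_hasCompactSupport {α : ℝ≥0} {F : E → ℝ} (hF : ContDiff ℝ 1 F)
    (hFc : HasCompactSupport F) (hα : α ≤ 1) : BoundedHolder α F := by
  obtain ⟨L, hL⟩ := hF.lipschitzWith_of_hasCompactSupport hFc one_ne_zero
  obtain ⟨M, hM⟩ := exists_norm_le_of_hasCompactSupport hF.continuous hFc
  exact .of_lipschitzWith hL hM hα

lemma boundedHolder_sum {X ι : Type*} [PseudoMetricSpace X] {α : ℝ≥0} (s : Finset ι) {f : ι → X → ℝ}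
    (hf : ∀ i ∈ s, BoundedHolder α (f i)) : BoundedHolder α fun x => ∑ i ∈ s, f i x := by
  classical
  induction s using Finset.induction_on with
  | empty => simpa using BoundedHolder.const 0
  | insert i s hi ih =>
    simp only [Finset.sum_insert hi]
    exact (hf i (Finset.mem_insert_self i s)).add
      (ih fun j hj => hf j (Finset.mem_insert_of_mem hj))

lemma IsWeakPoissonSolution.congr [MeasurableSpace E] {μ : Measure E} {ι : Type*} [Fintype ι]
    {b : Module.Basis ι ℝ E} {U V : Set E} {w : E} {g g' v : E → ℝ}
    (hsol : IsWeakPoissonSolution b μ U w g v) (hVU : V ⊆ U) (hg : EqOn g g' V) :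
    IsWeakPoissonSolution b μ V w g' v := by
  intro φ hφ hφc hφV
  rw [hsol φ hφ hφc (hφV.trans hVU)]
  refine integral_congr_ae (Eventually.of_forall fun x => ?_)
  by_cases hx : x ∈ V
  · simp [hg hx]
  · simp [fderiv_of_notMem_tsupport ℝ fun h => hx (hφV h)]

variable [FiniteDimensional ℝ E]

lemma exists_contDiff_eventuallyEq {n : ℕ} {F : E → ℝ} {p : E} (hF : ContDiffAt ℝ n F p) :
    ∃ F' : E → ℝ, ContDiff ℝ n F' ∧ HasCompactSupport F' ∧ F =ᶠ[𝓝 p] F' := by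
  obtain ⟨δ, hδ, hball⟩ := nhds_basis_closedBall.mem_iff.1 (hF.eventually (by simp))
  let χ : ContDiffBump p := ⟨δ / 2, δ, half_pos hδ, half_lt_self hδ⟩
  refine ⟨fun x => χ x * F x, contDiff_iff_contDiffAt.2 fun x => ?_, χ.hasCompactSupport.mul_right,
    ?_⟩
  · by_cases hx : x ∈ tsupport χ
    · exact (χ.contDiff.contDiffAt (n := (n : ℕ∞))).mul (hball (χ.tsupport_eq ▸ hx))
    · refine contDiffAt_const (c := 0) |>.congr_of_eventuallyEq ?_
      filter_upwards [notMem_tsupport_iff_eventuallyEq.1 hx] with y hy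
      simp [hy]
  · filter_upwards [χ.eventuallyEq_one] with x hx
    simp [hx]

variable [MeasurableSpace E] [BorelSpace E] {μ : Measure E} [μ.IsAddHaarMeasure]

namespace IsWeakPoissonSolution

variable {ι : Type*} [Fintype ι] {b : Module.Basis ι ℝ E} {U : Set E} {w p : E} {g v : E → ℝ}

lemma exists_boundedHolder_eventuallyEq [Nonempty ι] (hU : U ∈ 𝓝 p)
    (hsol : IsWeakPoissonSolution b μ U w g v) (hv : Continuous v) {N : ℝ≥0}
    (hN : ∀ y, ‖v y‖ ≤ N) (hg : Continuous g) {M : ℝ≥0} (hM : ∀ y, ‖g y‖ ≤ M) {α : ℝ≥0}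
    (hα : α < 1) : ∃ v', BoundedHolder α v' ∧ v =ᶠ[𝓝 p] v' := by
  obtain ⟨ρ, η, r, hρ, hρc, hη, hηc, hr, heq⟩ :=
    hsol.exists_eventuallyEq_mollify_sub_dyadicSeries hU hv hM
  refine ⟨_, ?_, heq⟩
  have hpot := (boundedHolder_dyadicSeries (μ := μ) hη hηc hg hM hr hα).mul (.const (-1))
  simpa [sub_eq_add_neg] using (boundedHolder_mollify hρ hρc hv hN hr hα.le).add hpot

/-- Schauder-type gain of one derivative: a Hölder continuous `g` in `Δ v = -∂_w g` makes `v`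
continuously differentiable. -/
lemma contDiffAt [Nonempty ι] (hU : U ∈ 𝓝 p) (hsol : IsWeakPoissonSolution b μ U w g v)
    (hv : Continuous v) {α : ℝ≥0} (hα : 0 < α) (hg : BoundedHolder α g) : ContDiffAt ℝ 1 v p := by
  obtain ⟨M, hM⟩ := hg.bounded
  obtain ⟨ρ, η, r, hρ, hρc, hη, hηc, hr, heq⟩ :=
    hsol.exists_eventuallyEq_mollify_sub_dyadicSeries hU hv hM
  exact ((contDiff_mollify hρ hρc hv (NNReal.coe_ne_zero.2 hr)).sub
    (contDiff_dyadicSeries hη hηc hg hα hr)).contDiffAt.congr_of_eventuallyEq heq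

end IsWeakPoissonSolution

end Regularity

section WeakDivergence

variable {E : Type*} [NormedAddCommGroup E] [NormedSpace ℝ E]

lemma fderiv_fderiv_apply_comm {φ : E → ℝ} {x : E} (hφ : ContDiffAt ℝ 2 φ x) (v w : E) :
    fderiv ℝ (fun y => fderiv ℝ φ y v) x w = fderiv ℝ (fun y => fderiv ℝ φ y w) x v := by
  have hd : DifferentiableAt ℝ (fderiv ℝ φ) x :=
    (hφ.fderiv_right (m := 1) (by norm_num)).differentiableAt one_ne_zero
  have hsymm := hφ.isSymmSndFDerivAt (by simp) w v
  simpa [fderiv_clm_apply hd (differentiableAt_const _)] using hsymm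

variable [MeasurableSpace E] {μ : Measure E}

/-- The field with components `F j` in the basis `b` is divergence free on `U` in the sense of
distributions. -/
def IsWeaklyDivFree {ι : Type*} [Fintype ι] (b : Module.Basis ι ℝ E) (μ : Measure E) (U : Set E)
    (F : ι → E → ℝ) : Prop :=
  ∀ φ : E → ℝ, ContDiff ℝ 2 φ → HasCompactSupport φ → tsupport φ ⊆ U →
    ∫ x, ∑ j, fderiv ℝ φ x (b j) * F j x ∂μ = 0

section

variable {ι : Type*} [Fintype ι] {b : Module.Basis ι ℝ E} {U V : Set E} {F F' : ι → E → ℝ}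

lemma IsWeaklyDivFree.neg (h : IsWeaklyDivFree b μ U F) :
    IsWeaklyDivFree b μ U fun j x => -F j x := by
  intro φ hφ hφc hφU
  simp only [mul_neg, Finset.sum_neg_distrib, integral_neg, h φ hφ hφc hφU, neg_zero]

lemma IsWeaklyDivFree.congr (h : IsWeaklyDivFree b μ U F) (hVU : V ⊆ U)
    (hF : ∀ j, EqOn (F j) (F' j) V) : IsWeaklyDivFree b μ V F' := by
  intro φ hφ hφc hφV
  rw [← h φ hφ hφc (hφV.trans hVU)]
  refine integral_congr_ae (Eventually.of_forall fun x => Finset.sum_congr rfl fun j _ => ?_)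
  by_cases hx : x ∈ V
  · simp [hF j hx]
  · simp [fderiv_of_notMem_tsupport ℝ fun h => hx (hφV h)]

end

variable [BorelSpace E] {φ F : E → ℝ}

lemma integrable_fderiv_apply_mul [IsFiniteMeasureOnCompacts μ] (hφ : ContDiff ℝ 1 φ)
    (hφc : HasCompactSupport φ) (hF : Continuous F) (v : E) :
    Integrable (fun x => fderiv ℝ φ x v * F x) μ :=
  ((contDiff_fderiv_apply (m := 0) hφ (by norm_num) v).continuous.mul hF)
    |>.integrable_of_hasCompactSupport (hφc.fderiv_apply ℝ v).mul_right

variable [FiniteDimensional ℝ E] [μ.IsAddHaarMeasure]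

lemma integral_fderiv_apply_mul (hφ : ContDiff ℝ 1 φ) (hφc : HasCompactSupport φ)
    (hF : ContDiff ℝ 1 F) (v : E) :
    ∫ x, fderiv ℝ φ x v * F x ∂μ = -∫ x, φ x * fderiv ℝ F x v ∂μ := by
  have hF' := contDiff_fderiv_apply (m := 0) hF (by norm_num) v
  rw [integral_mul_fderiv_eq_neg_fderiv_mul_of_integrable
    (integrable_fderiv_apply_mul hφ hφc hF.continuous v)
    ((hφ.continuous.mul hF'.continuous).integrable_of_hasCompactSupport hφc.mul_right)
    ((hφ.continuous.mul hF.continuous).integrable_of_hasCompactSupport hφc.mul_right)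
    (fun x _ => hφ.differentiable one_ne_zero x) fun x _ => hF.differentiable one_ne_zero x,
    neg_neg]

lemma integral_fderiv_apply_mul_fderiv_apply_comm (hφ : ContDiff ℝ 2 φ)
    (hφc : HasCompactSupport φ) (hF : ContDiff ℝ 1 F) (v w : E) :
    ∫ x, fderiv ℝ φ x v * fderiv ℝ F x w ∂μ = ∫ x, fderiv ℝ φ x w * fderiv ℝ F x v ∂μ := by
  have hparts (v w : E) : ∫ x, fderiv ℝ φ x v * fderiv ℝ F x w ∂μ =
      -∫ x, fderiv ℝ (fun y => fderiv ℝ φ y v) x w * F x ∂μ := by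
    rw [integral_fderiv_apply_mul (contDiff_fderiv_apply hφ (by norm_num) v)
      (hφc.fderiv_apply ℝ v) hF, neg_neg]
  simp only [hparts, fderiv_fderiv_apply_comm hφ.contDiffAt v w]

variable {ι : Type*} [Fintype ι] {b : Module.Basis ι ℝ E} {U : Set E}

lemma integral_mul_sum_fderiv {F : ι → E → ℝ} (hφ : ContDiff ℝ 1 φ)
    (hφc : HasCompactSupport φ) (hF : ∀ j, ContDiff ℝ 1 (F j)) :
    ∫ x, φ x * ∑ j, fderiv ℝ (F j) x (b j) ∂μ = -∫ x, ∑ j, fderiv ℝ φ x (b j) * F j x ∂μ := by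
  have hint (j) : Integrable (fun x => φ x * fderiv ℝ (F j) x (b j)) μ :=
    (hφ.continuous.mul (contDiff_fderiv_apply (m := 0) (hF j) (by norm_num) (b j)).continuous)
      |>.integrable_of_hasCompactSupport hφc.mul_right
  simp only [Finset.mul_sum]
  rw [integral_finsetSum _ fun j _ => hint j, integral_finsetSum _ fun j _ =>
    integrable_fderiv_apply_mul hφ hφc (hF j).continuous (b j), ← Finset.sum_neg_distrib]
  exact Finset.sum_congr rfl fun j _ => by
    rw [integral_fderiv_apply_mul hφ hφc (hF j), neg_neg]

lemma IsWeaklyDivFree.sum_fderiv_eq_zero {F : ι → E → ℝ} {p : E} (hU : U ∈ 𝓝 p)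
    (h : IsWeaklyDivFree b μ U F) (hF : ∀ j, ContDiffAt ℝ 1 (F j) p) :
    ∑ j, fderiv ℝ (F j) p (b j) = 0 := by
  choose F' hF' _ heq using fun j => exists_contDiff_eventuallyEq (n := 1) (hF j)
  obtain ⟨V, hVU, hV, hpV⟩ :=
    _root_.mem_nhds_iff.1 (inter_mem hU (eventually_all.2 heq))
  have h' : IsWeaklyDivFree b μ V F' :=
    h.congr (fun x hx => (hVU hx).1) fun j x hx => (hVU hx).2 j
  have hdiv : Continuous fun x => ∑ j, fderiv ℝ (F' j) x (b j) :=
    continuous_finsetSum _ fun j _ =>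
      (contDiff_fderiv_apply (m := 0) (hF' j) (by norm_num) (b j)).continuous
  have hae : ∀ᵐ x ∂μ, x ∈ V → ∑ j, fderiv ℝ (F' j) x (b j) = 0 := by
    refine hV.ae_eq_zero_of_integral_contDiff_smul_eq_zero
      (hdiv.locallyIntegrable.locallyIntegrableOn V) fun φ hφ hφc hφV => ?_
    simp only [smul_eq_mul]
    rw [integral_mul_sum_fderiv (hφ.of_le (by simp)) hφc hF', h' φ (contDiff_infty.1 hφ 2) hφc hφV,
      neg_zero]
  have hzero := Measure.eqOn_open_of_ae_eq ((ae_restrict_iff' hV.measurableSet).2 hae) hV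
    hdiv.continuousOn continuousOn_const hpV
  simpa only [(heq _).fderiv_eq] using hzero

end WeakDivergence

section Conductivity

variable {E : Type*} [NormedAddCommGroup E] [NormedSpace ℝ E]

section

variable {ι : Type*} [Fintype ι] {b : Module.Basis ι ℝ E} {U : Set E} {σ τ u : E → ℝ} {p : E}

/-- The first-order part of `σ⁻¹ ∑ j, ∂_j (σ ∂_j u) = Δ u + g`. The reciprocal of `σ` is a separate
argument `τ`, which is only required to be inverse to `σ` on the region under consideration. -/
noncomputable def conductivitySource (b : Module.Basis ι ℝ E) (σ τ u : E → ℝ) (x : E) : ℝ :=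
  -∑ j, σ x * fderiv ℝ τ x (b j) * fderiv ℝ u x (b j)

lemma sum_fderiv_mul_mul {ψ : E → ℝ} (hψ : ContDiff ℝ 1 ψ) (hψU : tsupport ψ ⊆ U)
    (hτ : ContDiff ℝ 1 τ) (hστ : ∀ x ∈ U, σ x * τ x = 1) (x : E) :
    ∑ j, fderiv ℝ (fun y => ψ y * τ y) x (b j) * (σ x * fderiv ℝ u x (b j)) =
      ∑ j, fderiv ℝ ψ x (b j) * fderiv ℝ u x (b j) - ψ x * conductivitySource b σ τ u x := by
  rw [conductivitySource, mul_neg, sub_neg_eq_add, Finset.mul_sum, ← Finset.sum_add_distrib]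
  refine Finset.sum_congr rfl fun j _ => ?_
  rw [fderiv_fun_mul (hψ.differentiable one_ne_zero x) (hτ.differentiable one_ne_zero x)]
  by_cases hx : x ∈ U
  · simp only [add_apply, smul_apply, smul_eq_mul]
    linear_combination fderiv ℝ ψ x (b j) * fderiv ℝ u x (b j) * hστ x hx
  · have hxψ : x ∉ tsupport ψ := fun h => hx (hψU h)
    simp [fderiv_of_notMem_tsupport ℝ hxψ, image_eq_zero_of_notMem_tsupport hxψ]

lemma continuous_conductivitySource (hσ : Continuous σ) (hτ : ContDiff ℝ 1 τ)
    (hu : ContDiff ℝ 1 u) : Continuous (conductivitySource b σ τ u) := by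
  have hderiv {F : E → ℝ} (hF : ContDiff ℝ 1 F) (j) : Continuous fun x => fderiv ℝ F x (b j) :=
    (contDiff_fderiv_apply (m := 0) hF (by norm_num) (b j)).continuous
  exact (continuous_finsetSum _ fun j _ => (hσ.mul (hderiv hτ j)).mul (hderiv hu j)).neg

lemma hasCompactSupport_conductivitySource (hσ : HasCompactSupport σ) :
    HasCompactSupport (conductivitySource b σ τ u) :=
  hσ.mono fun x hx hσx => hx <| by simp [conductivitySource, hσx]

lemma exists_boundedHolder_conductivitySource_eventuallyEq (hσ : ContDiff ℝ 1 σ)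
    (hσc : HasCompactSupport σ) (hτ : ContDiff ℝ 2 τ) {α : ℝ≥0} (hα : α ≤ 1)
    (hu : ∀ j, ∃ v, BoundedHolder α v ∧ (fun x => fderiv ℝ u x (b j)) =ᶠ[𝓝 p] v) :
    ∃ g, BoundedHolder α g ∧ conductivitySource b σ τ u =ᶠ[𝓝 p] g := by
  choose v hv heq using hu
  have hcoeff (j) : BoundedHolder α fun x => σ x * fderiv ℝ τ x (b j) :=
    boundedHolder_of_hasCompactSupport
      (hσ.mul (contDiff_fderiv_apply hτ (by norm_num) (b j))) hσc.mul_right hα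
  have hsum := boundedHolder_sum Finset.univ fun j _ => (hcoeff j).mul (hv j)
  refine ⟨_, (BoundedHolder.const (-1)).mul hsum, ?_⟩
  filter_upwards [eventually_all.2 heq] with x hx
  simp only [conductivitySource, hx, neg_one_mul]

end

variable [MeasurableSpace E] [BorelSpace E] {μ : Measure E}

namespace IsWeaklyDivFree

variable {ι : Type*} [Fintype ι] {b : Module.Basis ι ℝ E} {U : Set E} {σ τ u : E → ℝ} {p : E}

/-- Test with `ψ * τ`. -/
lemma integral_sum_fderiv_mul_fderiv [IsFiniteMeasureOnCompacts μ]
    (h : IsWeaklyDivFree b μ U fun j x => σ x * fderiv ℝ u x (b j)) (hσ : Continuous σ)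
    (hτ : ContDiff ℝ 2 τ) (hστ : ∀ x ∈ U, σ x * τ x = 1) (hu : ContDiff ℝ 1 u) {ψ : E → ℝ}
    (hψ : ContDiff ℝ 2 ψ) (hψc : HasCompactSupport ψ) (hψU : tsupport ψ ⊆ U) :
    ∫ x, ∑ j, fderiv ℝ ψ x (b j) * fderiv ℝ u x (b j) ∂μ =
      ∫ x, ψ x * conductivitySource b σ τ u x ∂μ := by
  have htest := h (fun x => ψ x * τ x) (hψ.mul hτ) hψc.mul_right
    (tsupport_mul_subset_left.trans hψU)
  simp only [sum_fderiv_mul_mul (hψ.of_le one_le_two) hψU (hτ.of_le one_le_two) hστ] at htest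
  have hleft : Integrable (fun x => ∑ j, fderiv ℝ ψ x (b j) * fderiv ℝ u x (b j)) μ :=
    integrable_finsetSum _ fun j _ => integrable_fderiv_apply_mul (hψ.of_le one_le_two) hψc
      (contDiff_fderiv_apply (m := 0) hu (by norm_num) (b j)).continuous (b j)
  have hright : Integrable (fun x => ψ x * conductivitySource b σ τ u x) μ :=
    (hψ.continuous.mul (continuous_conductivitySource hσ (hτ.of_le one_le_two) hu))
      |>.integrable_of_hasCompactSupport hψc.mul_right
  rwa [integral_sub hleft hright, sub_eq_zero] at htest

variable [FiniteDimensional ℝ E] [μ.IsAddHaarMeasure]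

lemma isWeakPoissonSolution
    (h : IsWeaklyDivFree b μ U fun j x => σ x * fderiv ℝ u x (b j)) (hσ : Continuous σ)
    (hτ : ContDiff ℝ 2 τ) (hστ : ∀ x ∈ U, σ x * τ x = 1) (hu : ContDiff ℝ 1 u) (w : E) :
    IsWeakPoissonSolution b μ U w (conductivitySource b σ τ u) fun x => fderiv ℝ u x w := by
  intro φ hφ hφc hφU
  have hdφ (v : E) : ContDiff ℝ 2 fun x => fderiv ℝ φ x v :=
    contDiff_fderiv_apply (contDiff_infty.1 hφ 3) (by norm_num) v
  have hint (v v' v'' : E) := integrable_fderiv_apply_mul (μ := μ) ((hdφ v).of_le one_le_two)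
    (hφc.fderiv_apply ℝ v) (contDiff_fderiv_apply (m := 0) hu (by norm_num) v').continuous v''
  rw [← h.integral_sum_fderiv_mul_fderiv hσ hτ hστ hu (hdφ w) (hφc.fderiv_apply ℝ w)
    ((tsupport_fderiv_apply_subset ℝ w).trans hφU)]
  simp only [laplacian, Finset.sum_mul]
  rw [integral_finsetSum _ fun j _ => hint _ _ _, integral_finsetSum _ fun j _ => hint _ _ _]
  refine Finset.sum_congr rfl fun j _ => ?_
  rw [integral_fderiv_apply_mul_fderiv_apply_comm (hdφ (b j)) (hφc.fderiv_apply ℝ (b j)) hu]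
  simp only [fderiv_fderiv_apply_comm (contDiff_infty.1 hφ 2).contDiffAt (b j) w]

/-- Two passes through the Poisson equation for the first derivatives of `u`: the first makes them
Hölder continuous, so that the second has a Hölder continuous right-hand side. -/
lemma contDiffAt_fderiv_apply [Nonempty ι] (hU : U ∈ 𝓝 p)
    (h : IsWeaklyDivFree b μ U fun j x => σ x * fderiv ℝ u x (b j)) (hσ : ContDiff ℝ 1 σ)
    (hσc : HasCompactSupport σ) (hτ : ContDiff ℝ 2 τ) (hστ : ∀ x ∈ U, σ x * τ x = 1)
    (hu : ContDiff ℝ 1 u) (huc : HasCompactSupport u) (w : E) :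
    ContDiffAt ℝ 1 (fun x => fderiv ℝ u x w) p := by
  have hsol := h.isWeakPoissonSolution hσ.continuous hτ hστ hu
  have hdu (w : E) : Continuous fun x => fderiv ℝ u x w :=
    (contDiff_fderiv_apply (m := 0) hu (by norm_num) w).continuous
  have hg : Continuous (conductivitySource b σ τ u) :=
    continuous_conductivitySource hσ.continuous (hτ.of_le one_le_two) hu
  obtain ⟨M, hM⟩ := exists_norm_le_of_hasCompactSupport hg
    (hasCompactSupport_conductivitySource hσc)
  have hα : (1 / 2 : ℝ≥0) < 1 := NNReal.half_lt_self one_ne_zero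
  obtain ⟨g, hgα, heq⟩ : ∃ g, BoundedHolder (1 / 2) g ∧ conductivitySource b σ τ u =ᶠ[𝓝 p] g := by
    refine exists_boundedHolder_conductivitySource_eventuallyEq hσ hσc hτ hα.le fun j => ?_
    obtain ⟨N, hN⟩ := exists_norm_le_of_hasCompactSupport (hdu (b j)) (huc.fderiv_apply ℝ (b j))
    exact (hsol (b j)).exists_boundedHolder_eventuallyEq hU (hdu (b j)) hN hg hM hα
  have hV := inter_mem hU heq
  exact ((hsol w).congr inter_subset_left fun x hx => hx.2).contDiffAt hV (hdu w) (by norm_num) hgα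

lemma contDiffOn_two [Nonempty ι] (hU : IsOpen U)
    (h : IsWeaklyDivFree b μ U fun j x => σ x * fderiv ℝ u x (b j)) (hσ : ContDiff ℝ 1 σ)
    (hσc : HasCompactSupport σ) (hτ : ContDiff ℝ 2 τ) (hστ : ∀ x ∈ U, σ x * τ x = 1)
    (hu : ContDiff ℝ 1 u) (huc : HasCompactSupport u) : ContDiffOn ℝ 2 u U := by
  rw [← one_add_one_eq_two, contDiffOn_succ_iff_fderiv_of_isOpen hU]
  refine ⟨(hu.differentiable one_ne_zero).differentiableOn, by simp,
    contDiffOn_clm_apply.2 fun w x hx => ?_⟩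
  exact (h.contDiffAt_fderiv_apply (hU.mem_nhds hx) hσ hσc hτ hστ hu huc w).contDiffWithinAt

end IsWeaklyDivFree

end Conductivity

section Curl

variable {E : Type*} [NormedAddCommGroup E] [NormedSpace ℝ E]

/-- The curl of the field with components `A j` in the basis `b`, with indices modulo `3`. -/
noncomputable def curl (b : Module.Basis (Fin 3) ℝ E) (A : Fin 3 → E → ℝ) (j : Fin 3) (x : E) : ℝ :=
  fderiv ℝ (A (j + 2)) x (b (j + 1)) - fderiv ℝ (A (j + 1)) x (b (j + 2))

variable {b : Module.Basis (Fin 3) ℝ E} {A A' : Fin 3 → E → ℝ} {σ u : E → ℝ} {p : E}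

lemma curl_congr (h : ∀ j, A j =ᶠ[𝓝 p] A' j) (j : Fin 3) : curl b A j p = curl b A' j p := by
  simp only [curl, (h _).fderiv_eq]

lemma curl_fderiv_apply (hu : ContDiffAt ℝ 2 u p) (j : Fin 3) :
    curl b (fun j x => fderiv ℝ u x (b j)) j p = 0 :=
  sub_eq_zero.2 (fderiv_fderiv_apply_comm hu _ _)

variable [FiniteDimensional ℝ E]

lemma isWeaklyDivFree_curl [MeasurableSpace E] [BorelSpace E] {μ : Measure E}
    [μ.IsAddHaarMeasure] (hA : ∀ j, ContDiff ℝ 1 (A j)) (U : Set E) :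
    IsWeaklyDivFree b μ U (curl b A) := by
  intro φ hφ hφc _
  have hint (v w : E) (j : Fin 3) :
      Integrable (fun x => fderiv ℝ φ x v * fderiv ℝ (A j) x w) μ :=
    integrable_fderiv_apply_mul (hφ.of_le one_le_two) hφc
      (contDiff_fderiv_apply (m := 0) (hA j) (by norm_num) w).continuous v
  have hcomm (j k l : Fin 3) :=
    integral_fderiv_apply_mul_fderiv_apply_comm (μ := μ) hφ hφc (hA l) (b j) (b k)
  simp only [curl, mul_sub]
  rw [integral_finsetSum]
  · simp only [integral_sub (hint _ _ _) (hint _ _ _), Fin.sum_univ_three, Fin.reduceAdd]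
    linear_combination hcomm 0 1 2 + hcomm 1 2 0 + hcomm 2 0 1
  · exact fun j _ => (hint _ _ _).sub (hint _ _ _)

/-- The fields `curl A` and `-σ grad u` agree, so the latter is weakly divergence free; hence `u`
is a weak solution of the conductivity equation, and elliptic regularity applies. -/
lemma contDiffAt_two_and_sum_fderiv_eq_zero (hσ : ContDiffAt ℝ 2 σ p) (hσp : σ p ≠ 0)
    (hu : ContDiffAt ℝ 1 u p) (hA : ∀ j, ContDiffAt ℝ 1 (A j) p)
    (hcurl : ∀ᶠ x in 𝓝 p, ∀ j, curl b A j x + σ x * fderiv ℝ u x (b j) = 0) :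
    ContDiffAt ℝ 2 u p ∧ ∑ j, fderiv ℝ (fun x => σ x * fderiv ℝ u x (b j)) p (b j) = 0 := by
  borelize E
  obtain ⟨σ', hσ', hσc, hσσ'⟩ := exists_contDiff_eventuallyEq (n := 2) hσ
  obtain ⟨τ, hτ, -, hστ⟩ := exists_contDiff_eventuallyEq (n := 2) (hσ.inv hσp)
  obtain ⟨u', hu', huc, huu'⟩ := exists_contDiff_eventuallyEq (n := 1) hu
  choose A' hA' _ hAA' using fun j => exists_contDiff_eventuallyEq (n := 1) (F := A j) (hA j)
  have hnear : ∀ᶠ x in 𝓝 p, σ' x * τ x = 1 ∧ ∀ j, -curl b A' j x = σ' x * fderiv ℝ u' x (b j) := by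
    filter_upwards [hcurl, hσσ', hστ, huu'.fderiv (𝕜 := ℝ), hσ.continuousAt.eventually_ne hσp,
      eventually_all.2 fun j => (hAA' j).eventuallyEq_nhds] with x hx hσx hτx hux hne hAx
    rw [← hσx, ← hτx, ← hux]
    refine ⟨mul_inv_cancel₀ hne, fun j => ?_⟩
    rw [← curl_congr hAx]
    linear_combination -hx j
  obtain ⟨U, hU, hUo, hpU⟩ := _root_.eventually_nhds_iff.1 hnear
  have hdiv : IsWeaklyDivFree b Measure.addHaar U fun j x => σ' x * fderiv ℝ u' x (b j) :=
    (isWeaklyDivFree_curl hA' U).neg.congr subset_rfl fun j x hx => (hU x hx).2 j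
  have hu2 : ContDiffAt ℝ 2 u' p := (hdiv.contDiffOn_two hUo (hσ'.of_le one_le_two) hσc hτ
    (fun x hx => (hU x hx).1) hu' huc).contDiffAt (hUo.mem_nhds hpU)
  refine ⟨hu2.congr_of_eventuallyEq huu', ?_⟩
  have hfield (j) : (fun x => σ x * fderiv ℝ u x (b j)) =ᶠ[𝓝 p]
      fun x => σ' x * fderiv ℝ u' x (b j) :=
    hσσ'.mul ((huu'.fderiv (𝕜 := ℝ)).fun_comp fun L => L (b j))
  simp only [(hfield _).fderiv_eq]
  exact hdiv.sum_fderiv_eq_zero (hUo.mem_nhds hpU) fun j => (hσ'.of_le one_le_two).contDiffAt.mul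
    ((hu2.fderiv_right (by norm_num)).clm_apply contDiffAt_const)

end Curl

section ProductRules

variable {E : Type*} [NormedAddCommGroup E] [NormedSpace ℝ E] {f w : E → ℝ} {p : E}

lemma fderiv_mul_apply (hf : DifferentiableAt ℝ f p) (hw : DifferentiableAt ℝ w p) (e : E) :
    fderiv ℝ (fun x => f x * w x) p e = f p * fderiv ℝ w p e + w p * fderiv ℝ f p e := by
  simp [fderiv_fun_mul hf hw]

lemma sq_mul_fderiv_inv_mul_apply (hf : DifferentiableAt ℝ f p) (hfp : f p ≠ 0)
    (hw : DifferentiableAt ℝ w p) (e : E) :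
    f p ^ 2 * fderiv ℝ (fun x => (f x)⁻¹ * w x) p e =
      f p * fderiv ℝ w p e - w p * fderiv ℝ f p e := by
  have hinv : fderiv ℝ (fun x => (f x)⁻¹) p = -(f p ^ 2)⁻¹ • fderiv ℝ f p :=
    ((hasDerivAt_inv hfp).comp_hasFDerivAt p hf.hasFDerivAt).fderiv
  rw [fderiv_mul_apply (hf.fun_inv hfp) hw, hinv]
  simp only [smul_apply, smul_eq_mul]
  field_simp
  ring

lemma differentiableAt_fderiv_apply (hf : ContDiffAt ℝ 2 f p) (e : E) :
    DifferentiableAt ℝ (fun x => fderiv ℝ f x e) p :=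
  ((hf.fderiv_right (m := 1) le_rfl).differentiableAt one_ne_zero).clm_apply
    (differentiableAt_const e)

lemma curl_mul {b : Module.Basis (Fin 3) ℝ E} {A : Fin 3 → E → ℝ} (hf : DifferentiableAt ℝ f p)
    (hA : ∀ j, DifferentiableAt ℝ (A j) p) (j : Fin 3) :
    curl b (fun j x => f x * A j x) j p = f p * curl b A j p +
      (fderiv ℝ f p (b (j + 1)) * A (j + 2) p - fderiv ℝ f p (b (j + 2)) * A (j + 1) p) := by
  rw [curl, fderiv_mul_apply hf (hA _), fderiv_mul_apply hf (hA _), curl]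
  ring

lemma curl_inv_mul_curl {b : Module.Basis (Fin 3) ℝ E} {A : Fin 3 → E → ℝ} {σ u : E → ℝ}
    (hσp : ∀ᶠ x in 𝓝 p, σ x ≠ 0)
    (hcurl : ∀ᶠ x in 𝓝 p, ∀ j, curl b A j x + σ x * fderiv ℝ u x (b j) = 0) (j : Fin 3) :
    (fun x => (σ x)⁻¹ * curl b A j x) =ᶠ[𝓝 p] fun x => fderiv ℝ (-u) x (b j) := by
  filter_upwards [hσp, hcurl] with x hx hAx
  rw [fderiv_neg, neg_apply]
  field_simp
  linear_combination hAx j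

end ProductRules

section Coordinates

/-- The standard basis of `ℝ³`, modelled as `ℝ × ℝ × ℝ`. -/
noncomputable def coordBasis : Module.Basis (Fin 3) ℝ (ℝ × ℝ × ℝ) :=
  .ofEquivFun
    { toFun := fun x => ![x.1, x.2.1, x.2.2]
      invFun := fun c => (c 0, c 1, c 2)
      map_add' := fun x y => by simp
      map_smul' := fun a x => by simp
      left_inv := fun x => rfl
      right_inv := fun c => by ext j; fin_cases j <;> rfl }

lemma coordBasis_apply (j : Fin 3) :
    coordBasis j = ((Pi.single j 1 : Fin 3 → ℝ) 0, (Pi.single j 1 : Fin 3 → ℝ) 1,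
      (Pi.single j 1 : Fin 3 → ℝ) 2) := by
  rw [coordBasis, Module.Basis.coe_ofEquivFun]
  rfl

section Slices

variable {X : Type*} [NormedAddCommGroup X] [NormedSpace ℝ X] {F : ℝ × ℝ × ℝ → X} {p : ℝ × ℝ × ℝ}

lemma deriv_fst_slice (hF : DifferentiableAt ℝ F p) :
    deriv (fun t => F (t, p.2.1, p.2.2)) p.1 = fderiv ℝ F p (coordBasis 0) := by
  have hline : HasDerivAt (fun t : ℝ => (t, p.2.1, p.2.2)) (coordBasis 0) p.1 := by
    simpa [coordBasis_apply] using
      (hasDerivAt_id p.1).prodMk ((hasDerivAt_const _ p.2.1).prodMk (hasDerivAt_const _ p.2.2))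
  exact (HasFDerivAt.comp_hasDerivAt (f := fun t => (t, p.2.1, p.2.2)) _ hF.hasFDerivAt hline).deriv

lemma deriv_snd_slice (hF : DifferentiableAt ℝ F p) :
    deriv (fun t => F (p.1, t, p.2.2)) p.2.1 = fderiv ℝ F p (coordBasis 1) := by
  have hline : HasDerivAt (fun t : ℝ => (p.1, t, p.2.2)) (coordBasis 1) p.2.1 := by
    simpa [coordBasis_apply] using
      (hasDerivAt_const _ p.1).prodMk ((hasDerivAt_id p.2.1).prodMk (hasDerivAt_const _ p.2.2))
  exact (HasFDerivAt.comp_hasDerivAt (f := fun t => (p.1, t, p.2.2)) _ hF.hasFDerivAt hline).deriv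

lemma deriv_thd_slice (hF : DifferentiableAt ℝ F p) :
    deriv (fun t => F (p.1, p.2.1, t)) p.2.2 = fderiv ℝ F p (coordBasis 2) := by
  have hline : HasDerivAt (fun t : ℝ => (p.1, p.2.1, t)) (coordBasis 2) p.2.2 := by
    simpa [coordBasis_apply] using
      (hasDerivAt_const _ p.1).prodMk ((hasDerivAt_const _ p.2.1).prodMk (hasDerivAt_id p.2.2))
  exact (HasFDerivAt.comp_hasDerivAt (f := fun t => (p.1, p.2.1, t)) _ hF.hasFDerivAt hline).deriv

end Slices

variable {F : Fin 3 → ℝ × ℝ × ℝ → ℝ} {p : ℝ × ℝ × ℝ}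

lemma vdiv_eq_sum_fderiv (hF : ∀ j, DifferentiableAt ℝ (F j) p) :
    vdiv (F 0) (F 1) (F 2) p = ∑ j, fderiv ℝ (F j) p (coordBasis j) := by
  rw [Fin.sum_univ_three, ← deriv_fst_slice (hF 0), ← deriv_snd_slice (hF 1),
    ← deriv_thd_slice (hF 2)]
  rfl

/-- The gradient, in terms of coordinatewise partial derivatives. -/
noncomputable def grad (u : ℝ × ℝ × ℝ → ℝ) : Fin 3 → ℝ × ℝ × ℝ → ℝ :=
  ![rpd1 u, rpd2 u, rpd3 u]

/-- The curl, in terms of coordinatewise partial derivatives; compare `curl`, which is defined by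
Fréchet derivatives. -/
noncomputable def rot (F : Fin 3 → ℝ × ℝ × ℝ → ℝ) : Fin 3 → ℝ × ℝ × ℝ → ℝ :=
  ![curl1 (F 0) (F 1) (F 2), curl2 (F 0) (F 1) (F 2), curl3 (F 0) (F 1) (F 2)]

lemma grad_eq_fderiv {u : ℝ × ℝ × ℝ → ℝ} (hu : DifferentiableAt ℝ u p) (j : Fin 3) :
    grad u j p = fderiv ℝ u p (coordBasis j) := by
  fin_cases j
  exacts [deriv_fst_slice hu, deriv_snd_slice hu, deriv_thd_slice hu]

lemma rot_eq_curl (hF : ∀ j, DifferentiableAt ℝ (F j) p) (j : Fin 3) :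
    rot F j p = curl coordBasis F j p := by
  fin_cases j
  exacts [congrArg₂ (· - ·) (deriv_snd_slice (hF 2)) (deriv_thd_slice (hF 1)),
    congrArg₂ (· - ·) (deriv_thd_slice (hF 0)) (deriv_fst_slice (hF 2)),
    congrArg₂ (· - ·) (deriv_fst_slice (hF 1)) (deriv_snd_slice (hF 0))]

end Coordinates

section Dirac

/-- The scalar part of a quaternion as a continuous linear functional. -/
noncomputable def scalarPart : ℍ[ℝ] →L[ℝ] ℝ :=
  LinearMap.toContinuousLinearMap (show ℍ[ℝ] →ₗ[ℝ] ℝ from QuaternionAlgebra.reₗ _ _ _)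

/-- The components of the vector part of a quaternion as continuous linear functionals. -/
noncomputable def vectorPart : Fin 3 → ℍ[ℝ] →L[ℝ] ℝ :=
  ![LinearMap.toContinuousLinearMap (show ℍ[ℝ] →ₗ[ℝ] ℝ from QuaternionAlgebra.imIₗ _ _ _),
    LinearMap.toContinuousLinearMap (show ℍ[ℝ] →ₗ[ℝ] ℝ from QuaternionAlgebra.imJₗ _ _ _),
    LinearMap.toContinuousLinearMap (show ℍ[ℝ] →ₗ[ℝ] ℝ from QuaternionAlgebra.imKₗ _ _ _)]

lemma scalarPart_apply (a : ℍ[ℝ]) : scalarPart a = a.re := rfl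

lemma vectorPart_zero_apply (a : ℍ[ℝ]) : vectorPart 0 a = a.imI := rfl

lemma vectorPart_one_apply (a : ℍ[ℝ]) : vectorPart 1 a = a.imJ := rfl

lemma vectorPart_two_apply (a : ℍ[ℝ]) : vectorPart 2 a = a.imK := rfl

lemma scalarPart_mul (a b : ℍ[ℝ]) :
    scalarPart (a * b) = scalarPart a * scalarPart b - ∑ j, vectorPart j a * vectorPart j b := by
  simp only [scalarPart_apply, Quaternion.re_mul, Fin.sum_univ_three, vectorPart_zero_apply,
    vectorPart_one_apply, vectorPart_two_apply]
  ring

lemma vectorPart_mul (a b : ℍ[ℝ]) (j : Fin 3) :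
    vectorPart j (a * b) = scalarPart a * vectorPart j b + vectorPart j a * scalarPart b +
      (vectorPart (j + 1) a * vectorPart (j + 2) b -
        vectorPart (j + 2) a * vectorPart (j + 1) b) := by
  fin_cases j <;>
  · simp only [Fin.zero_eta, Fin.mk_one, Fin.reduceFinMk, Fin.reduceAdd, zero_add, scalarPart_apply,
      vectorPart_zero_apply, vectorPart_one_apply, vectorPart_two_apply, Quaternion.imI_mul,
      Quaternion.imJ_mul, Quaternion.imK_mul]
    ring

lemma vectorPart_qconjR (a : ℍ[ℝ]) (j : Fin 3) : vectorPart j (qconjR a) = -vectorPart j a := by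
  fin_cases j <;> rfl

lemma vectorPart_coe (a : ℝ) (j : Fin 3) : vectorPart j (a : ℍ[ℝ]) = 0 := by
  fin_cases j <;> rfl

lemma scalarPart_units_mul_add (a : Fin 3 → ℍ[ℝ]) :
    scalarPart (qi * a 0 + qj * a 1 + qk * a 2) = -∑ j, vectorPart j (a j) := by
  simp only [scalarPart_apply, Quaternion.re_add, Quaternion.re_mul, Fin.sum_univ_three,
    vectorPart_zero_apply, vectorPart_one_apply, vectorPart_two_apply]
  simp only [qi, qj, qk]
  ring

lemma vectorPart_units_mul_add (a : Fin 3 → ℍ[ℝ]) (j : Fin 3) :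
    vectorPart j (qi * a 0 + qj * a 1 + qk * a 2) =
      scalarPart (a j) + (vectorPart (j + 2) (a (j + 1)) - vectorPart (j + 1) (a (j + 2))) := by
  fin_cases j <;>
  · simp only [Fin.zero_eta, Fin.mk_one, Fin.reduceFinMk, Fin.reduceAdd, zero_add, scalarPart_apply,
      vectorPart_zero_apply, vectorPart_one_apply, vectorPart_two_apply, Quaternion.imI_add,
      Quaternion.imJ_add, Quaternion.imK_add, Quaternion.imI_mul, Quaternion.imJ_mul,
      Quaternion.imK_mul]
    simp only [qi, qj, qk]
    ring

variable {f : ℝ × ℝ × ℝ → ℝ} {W : ℝ × ℝ × ℝ → ℍ[ℝ]} {p : ℝ × ℝ × ℝ}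

lemma dr_eq (hW : DifferentiableAt ℝ W p) :
    Dr W p = qi * fderiv ℝ W p (coordBasis 0) + qj * fderiv ℝ W p (coordBasis 1) +
      qk * fderiv ℝ W p (coordBasis 2) := by
  rw [← deriv_fst_slice hW, ← deriv_snd_slice hW, ← deriv_thd_slice hW]
  rfl

lemma fderiv_clm_comp_apply (hW : DifferentiableAt ℝ W p) (k : ℍ[ℝ] →L[ℝ] ℝ) (e : ℝ × ℝ × ℝ) :
    fderiv ℝ (fun q => k (W q)) p e = k (fderiv ℝ W p e) :=
  DFunLike.congr_fun (k.hasFDerivAt.comp p hW.hasFDerivAt).fderiv e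

lemma scalarPart_dr (hW : DifferentiableAt ℝ W p) :
    scalarPart (Dr W p) = -∑ j, fderiv ℝ (fun q => vectorPart j (W q)) p (coordBasis j) := by
  simp only [dr_eq hW, fderiv_clm_comp_apply hW]
  exact scalarPart_units_mul_add fun j => fderiv ℝ W p (coordBasis j)

lemma vectorPart_dr (hW : DifferentiableAt ℝ W p) (j : Fin 3) :
    vectorPart j (Dr W p) = fderiv ℝ (fun q => scalarPart (W q)) p (coordBasis j) +
      curl coordBasis (fun k q => vectorPart k (W q)) j p := by
  simp only [dr_eq hW, curl, fderiv_clm_comp_apply hW]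
  exact vectorPart_units_mul_add (fun k => fderiv ℝ W p (coordBasis k)) j

lemma differentiableAt_coe (hf : DifferentiableAt ℝ f p) :
    DifferentiableAt ℝ (fun q => (f q : ℍ[ℝ])) p :=
  (Algebra.linearMap ℝ ℍ[ℝ]).toContinuousLinearMap.differentiableAt.comp p hf

lemma scalarPart_dr_coe (hf : DifferentiableAt ℝ f p) :
    scalarPart (Dr (fun q => (f q : ℍ[ℝ])) p) = 0 := by
  simp [scalarPart_dr (differentiableAt_coe hf), vectorPart_coe]

lemma vectorPart_dr_coe (hf : DifferentiableAt ℝ f p) (j : Fin 3) :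
    vectorPart j (Dr (fun q => (f q : ℍ[ℝ])) p) = fderiv ℝ f p (coordBasis j) := by
  rw [vectorPart_dr (differentiableAt_coe hf)]
  simp only [curl, vectorPart_coe, fderiv_fun_const, Pi.zero_apply, zero_apply, sub_zero, add_zero]
  rfl

/-- The equation `DW = (Df / f) W̄` at the point `p`. -/
def VekuaEq (f : ℝ × ℝ × ℝ → ℝ) (W : ℝ × ℝ × ℝ → ℍ[ℝ]) (p : ℝ × ℝ × ℝ) : Prop :=
  Dr W p = (((f p)⁻¹ : ℝ) : ℍ[ℝ]) * Dr (fun q => (f q : ℍ[ℝ])) p * qconjR (W p)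

lemma VekuaEq.neg_sum_fderiv_vectorPart (h : VekuaEq f W p) (hf : DifferentiableAt ℝ f p)
    (hW : DifferentiableAt ℝ W p) :
    -∑ j, fderiv ℝ (fun q => vectorPart j (W q)) p (coordBasis j) =
      (f p)⁻¹ * ∑ j, fderiv ℝ f p (coordBasis j) * vectorPart j (W p) := by
  rw [← scalarPart_dr hW, h, mul_assoc, Quaternion.coe_mul_eq_smul, map_smul, scalarPart_mul]
  simp [scalarPart_dr_coe hf, vectorPart_dr_coe hf, vectorPart_qconjR]

lemma VekuaEq.fderiv_scalarPart_add_curl (h : VekuaEq f W p) (hf : DifferentiableAt ℝ f p)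
    (hW : DifferentiableAt ℝ W p) (j : Fin 3) :
    fderiv ℝ (fun q => scalarPart (W q)) p (coordBasis j) +
        curl coordBasis (fun k q => vectorPart k (W q)) j p =
      (f p)⁻¹ * (scalarPart (W p) * fderiv ℝ f p (coordBasis j) -
        (fderiv ℝ f p (coordBasis (j + 1)) * vectorPart (j + 2) (W p) -
          fderiv ℝ f p (coordBasis (j + 2)) * vectorPart (j + 1) (W p))) := by
  have hconj : scalarPart (qconjR (W p)) = scalarPart (W p) := rfl
  rw [← vectorPart_dr hW, h, mul_assoc, Quaternion.coe_mul_eq_smul, map_smul, smul_eq_mul,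
    vectorPart_mul, scalarPart_dr_coe hf, hconj]
  simp only [vectorPart_dr_coe hf, vectorPart_qconjR]
  ring

/-- The scalar function `u = f⁻¹ W₀`. -/
noncomputable def vekuaPotential (f : ℝ × ℝ × ℝ → ℝ) (W : ℝ × ℝ × ℝ → ℍ[ℝ]) (q : ℝ × ℝ × ℝ) : ℝ :=
  (f q)⁻¹ * scalarPart (W q)

/-- The components of the vector field `v = f 𝐖`. -/
noncomputable def vekuaField (f : ℝ × ℝ × ℝ → ℝ) (W : ℝ × ℝ × ℝ → ℍ[ℝ]) (j : Fin 3)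
    (q : ℝ × ℝ × ℝ) : ℝ :=
  f q * vectorPart j (W q)

lemma VekuaEq.sum_fderiv_vekuaField (h : VekuaEq f W p) (hf : DifferentiableAt ℝ f p)
    (hfp : f p ≠ 0) (hW : DifferentiableAt ℝ W p) :
    ∑ j, fderiv ℝ (vekuaField f W j) p (coordBasis j) = 0 := by
  have hdiv := h.neg_sum_fderiv_vectorPart hf hW
  have hmul (j) : fderiv ℝ (vekuaField f W j) p (coordBasis j) =
      f p * fderiv ℝ (fun q => vectorPart j (W q)) p (coordBasis j) +
        fderiv ℝ f p (coordBasis j) * vectorPart j (W p) :=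
    (fderiv_mul_apply hf (by fun_prop) _).trans (by ring)
  simp only [hmul, Finset.sum_add_distrib, ← Finset.mul_sum]
  field_simp at hdiv
  linear_combination -hdiv

lemma VekuaEq.curl_vekuaField_add (h : VekuaEq f W p) (hf : DifferentiableAt ℝ f p)
    (hfp : f p ≠ 0) (hW : DifferentiableAt ℝ W p) (j : Fin 3) :
    curl coordBasis (vekuaField f W) j p +
      f p ^ 2 * fderiv ℝ (vekuaPotential f W) p (coordBasis j) = 0 := by
  have hvec := h.fderiv_scalarPart_add_curl hf hW j
  have hcurl : curl coordBasis (vekuaField f W) j p = _ :=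
    curl_mul hf (fun j => by fun_prop) j
  have hgrad : f p ^ 2 * fderiv ℝ (vekuaPotential f W) p (coordBasis j) = _ :=
    sq_mul_fderiv_inv_mul_apply hf hfp (by fun_prop) (coordBasis j)
  rw [hcurl, hgrad]
  field_simp at hvec
  linear_combination hvec

lemma differentiableAt_vekuaPotential (hf : DifferentiableAt ℝ f p) (hfp : f p ≠ 0)
    (hW : DifferentiableAt ℝ W p) : DifferentiableAt ℝ (vekuaPotential f W) p :=
  (hf.fun_inv hfp).mul (by fun_prop)

lemma differentiableAt_vekuaField (hf : DifferentiableAt ℝ f p) (hW : DifferentiableAt ℝ W p)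
    (j : Fin 3) : DifferentiableAt ℝ (vekuaField f W j) p :=
  hf.mul (by fun_prop)

lemma eventually_differentiableAt {X : Type*} [NormedAddCommGroup X] [NormedSpace ℝ X]
    {F : ℝ × ℝ × ℝ → X} (hF : ContDiffAt ℝ 1 F p) : ∀ᶠ q in 𝓝 p, DifferentiableAt ℝ F q :=
  (hF.eventually (by simp)).mono fun _ h => h.differentiableAt one_ne_zero

lemma VekuaEq.vdiv_vekuaField (h : VekuaEq f W p) (hf : DifferentiableAt ℝ f p)
    (hfp : f p ≠ 0) (hW : DifferentiableAt ℝ W p) :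
    vdiv (vekuaField f W 0) (vekuaField f W 1) (vekuaField f W 2) p = 0 :=
  (vdiv_eq_sum_fderiv (differentiableAt_vekuaField hf hW)).trans
    (h.sum_fderiv_vekuaField hf hfp hW)

lemma VekuaEq.rot_vekuaField_add (h : VekuaEq f W p) (hf : DifferentiableAt ℝ f p)
    (hfp : f p ≠ 0) (hW : DifferentiableAt ℝ W p) (j : Fin 3) :
    (f p)⁻¹ * rot (vekuaField f W) j p + f p * grad (vekuaPotential f W) j p = 0 := by
  rw [rot_eq_curl (differentiableAt_vekuaField hf hW),
    grad_eq_fderiv (differentiableAt_vekuaPotential hf hfp hW)]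
  field_simp
  linear_combination h.curl_vekuaField_add hf hfp hW j

/-- A nonvanishing `C²` weight `f` and a `C¹` solution `W` of the Vekua equation near the point
`p`. -/
structure IsVekuaPairAt (f : ℝ × ℝ × ℝ → ℝ) (W : ℝ × ℝ × ℝ → ℍ[ℝ]) (p : ℝ × ℝ × ℝ) : Prop where
  contDiffAt_weight : ContDiffAt ℝ 2 f p
  weight_ne_zero : f p ≠ 0
  contDiffAt : ContDiffAt ℝ 1 W p
  eventually_vekuaEq : ∀ᶠ q in 𝓝 p, VekuaEq f W q

namespace IsVekuaPairAt

variable (h : IsVekuaPairAt f W p)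
include h

lemma eventually_regular :
    ∀ᶠ q in 𝓝 p, DifferentiableAt ℝ f q ∧ f q ≠ 0 ∧ DifferentiableAt ℝ W q :=
  (eventually_differentiableAt (h.contDiffAt_weight.of_le one_le_two)).and
    ((h.contDiffAt_weight.continuousAt.eventually_ne h.weight_ne_zero).and
      (eventually_differentiableAt h.contDiffAt))

lemma eventually_curl_vekuaField_add : ∀ᶠ q in 𝓝 p, ∀ j, curl coordBasis (vekuaField f W) j q +
    f q ^ 2 * fderiv ℝ (vekuaPotential f W) q (coordBasis j) = 0 := by
  filter_upwards [h.eventually_vekuaEq, h.eventually_regular] with q hq ⟨hf, hfq, hW⟩ j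
  exact hq.curl_vekuaField_add hf hfq hW j

lemma contDiffAt_vekuaPotential_and_sum_fderiv :
    ContDiffAt ℝ 2 (vekuaPotential f W) p ∧
      ∑ j, fderiv ℝ (fun q => f q ^ 2 * fderiv ℝ (vekuaPotential f W) q (coordBasis j)) p
        (coordBasis j) = 0 :=
  have hf := h.contDiffAt_weight.of_le one_le_two
  have hW (k : ℍ[ℝ] →L[ℝ] ℝ) : ContDiffAt ℝ 1 (fun q => k (W q)) p :=
    k.contDiff.contDiffAt.comp p h.contDiffAt
  contDiffAt_two_and_sum_fderiv_eq_zero (h.contDiffAt_weight.pow 2) (pow_ne_zero 2 h.weight_ne_zero)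
    ((hf.inv h.weight_ne_zero).mul (hW _)) (fun _ => hf.mul (hW _))
    h.eventually_curl_vekuaField_add

lemma vdiv_sq_mul_grad :
    vdiv (fun q => f q ^ 2 * grad (vekuaPotential f W) 0 q)
      (fun q => f q ^ 2 * grad (vekuaPotential f W) 1 q)
      (fun q => f q ^ 2 * grad (vekuaPotential f W) 2 q) p = 0 := by
  have hgrad (j : Fin 3) : (fun q => f q ^ 2 * grad (vekuaPotential f W) j q) =ᶠ[𝓝 p]
      fun q => f q ^ 2 * fderiv ℝ (vekuaPotential f W) q (coordBasis j) := by
    filter_upwards [h.eventually_regular] with q ⟨hf, hfq, hW⟩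
    rw [grad_eq_fderiv (differentiableAt_vekuaPotential hf hfq hW)]
  have hdiff (j : Fin 3) :
      DifferentiableAt ℝ (fun q => f q ^ 2 * grad (vekuaPotential f W) j q) p :=
    ((h.eventually_regular.self_of_nhds.1.pow 2).mul
      (differentiableAt_fderiv_apply h.contDiffAt_vekuaPotential_and_sum_fderiv.1
        _)).congr_of_eventuallyEq (hgrad j)
  rw [vdiv_eq_sum_fderiv (F := fun j q => f q ^ 2 * grad (vekuaPotential f W) j q) hdiff]
  simp only [(hgrad _).fderiv_eq]
  exact h.contDiffAt_vekuaPotential_and_sum_fderiv.2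

/-- Near `p` the field `f⁻² rot v` is the gradient `-grad u`, hence its curl vanishes. -/
lemma rot_inv_sq_mul_rot (j : Fin 3) :
    rot (fun k q => (f q ^ 2)⁻¹ * rot (vekuaField f W) k q) j p = 0 := by
  have hgrad (k : Fin 3) : (fun q => (f q ^ 2)⁻¹ * rot (vekuaField f W) k q) =ᶠ[𝓝 p]
      fun q => fderiv ℝ (-vekuaPotential f W) q (coordBasis k) := by
    refine EventuallyEq.trans ?_ (curl_inv_mul_curl
      (h.eventually_regular.mono fun q hq => pow_ne_zero 2 hq.2.1)
      h.eventually_curl_vekuaField_add k)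
    filter_upwards [h.eventually_regular] with q ⟨hf, _, hW⟩
    rw [rot_eq_curl (differentiableAt_vekuaField hf hW)]
  have hu := h.contDiffAt_vekuaPotential_and_sum_fderiv.1.neg
  have hdiff (k : Fin 3) :=
    (differentiableAt_fderiv_apply hu (coordBasis k)).congr_of_eventuallyEq (hgrad k)
  rw [rot_eq_curl hdiff, curl_congr hgrad]
  exact curl_fderiv_apply hu j

end IsVekuaPairAt

end Dirac

end

end QuaternionicVekua

open QuaternionicVekua in
theorem quaternionic_vekua_parts_general {G : Set (ℝ × ℝ × ℝ)} (hG : IsOpen G)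
    {f : ℝ × ℝ × ℝ → ℝ} (hf : ContDiffOn ℝ 2 f G) (hf0 : ∀ p ∈ G, f p ≠ 0)
    {W : ℝ × ℝ × ℝ → ℍ[ℝ]} (hW : ContDiffOn ℝ 1 W G) (hVek : ∀ p ∈ G, VekuaEq f W p)
    {p : ℝ × ℝ × ℝ} (hp : p ∈ G) :
    vdiv (vekuaField f W 0) (vekuaField f W 1) (vekuaField f W 2) p = 0 ∧
    (∀ j, (f p)⁻¹ * rot (vekuaField f W) j p + f p * grad (vekuaPotential f W) j p = 0) ∧
    vdiv (fun q => f q ^ 2 * grad (vekuaPotential f W) 0 q)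
      (fun q => f q ^ 2 * grad (vekuaPotential f W) 1 q)
      (fun q => f q ^ 2 * grad (vekuaPotential f W) 2 q) p = 0 ∧
    ∀ j, rot (fun k q => (f q ^ 2)⁻¹ * rot (vekuaField f W) k q) j p = 0 := by
  have hpG := hG.mem_nhds hp
  have h : IsVekuaPairAt f W p :=
    ⟨hf.contDiffAt hpG, hf0 p hp, hW.contDiffAt hpG, Filter.eventually_of_mem hpG hVek⟩
  have ⟨hfp, hfp0, hWp⟩ := h.eventually_regular.self_of_nhds
  exact ⟨(hVek p hp).vdiv_vekuaField hfp hfp0 hWp, (hVek p hp).rot_vekuaField_add hfp hfp0 hWp,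
    h.vdiv_sq_mul_grad, h.rot_inv_sq_mul_rot⟩

/-- Structure of solutions of the 3D main quaternionic Vekua-type equation
`DW = (Df/f)·W̄`: with `𝐖` the vector part and `W₀` the scalar part of `W`,
(a) `div(f𝐖) = 0`; (b) `f⁻¹ rot(f𝐖) + f grad(f⁻¹W₀) = 0`; and consequently
(c) `div(f² grad(f⁻¹W₀)) = 0` and (d) `rot(f⁻² rot(f𝐖)) = 0` on `G`. -/
theorem quaternionic_vekua_parts
    (G : Set (ℝ × ℝ × ℝ)) (hG : IsOpen G) (hsc : SimplyConnectedSpace G)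
    (f : ℝ × ℝ × ℝ → ℝ) (hf : ContDiffOn ℝ 2 f G) (hfpos : ∀ p ∈ G, 0 < f p)
    (W : ℝ × ℝ × ℝ → ℍ[ℝ]) (hW : ContDiffOn ℝ 1 W G)
    (hVek : ∀ p ∈ G,
      Dr W p =
        (((f p)⁻¹ : ℝ) : ℍ[ℝ]) * Dr (fun q => ((f q : ℝ) : ℍ[ℝ])) p * qconjR (W p)) :
    ∀ p ∈ G,
      (vdiv (fun q => f q * (W q).imI) (fun q => f q * (W q).imJ)
          (fun q => f q * (W q).imK) p = 0)
      ∧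
      ((f p)⁻¹ * curl1 (fun q => f q * (W q).imI) (fun q => f q * (W q).imJ)
            (fun q => f q * (W q).imK) p
          + f p * rpd1 (fun q => (f q)⁻¹ * (W q).re) p = 0 ∧
        (f p)⁻¹ * curl2 (fun q => f q * (W q).imI) (fun q => f q * (W q).imJ)
            (fun q => f q * (W q).imK) p
          + f p * rpd2 (fun q => (f q)⁻¹ * (W q).re) p = 0 ∧
        (f p)⁻¹ * curl3 (fun q => f q * (W q).imI) (fun q => f q * (W q).imJ)
            (fun q => f q * (W q).imK) p
          + f p * rpd3 (fun q => (f q)⁻¹ * (W q).re) p = 0)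
      ∧
      (vdiv (fun q => f q ^ 2 * rpd1 (fun w => (f w)⁻¹ * (W w).re) q)
          (fun q => f q ^ 2 * rpd2 (fun w => (f w)⁻¹ * (W w).re) q)
          (fun q => f q ^ 2 * rpd3 (fun w => (f w)⁻¹ * (W w).re) q) p = 0)
      ∧
      (curl1 (fun q => (f q ^ 2)⁻¹ * curl1 (fun w => f w * (W w).imI)
              (fun w => f w * (W w).imJ) (fun w => f w * (W w).imK) q)
          (fun q => (f q ^ 2)⁻¹ * curl2 (fun w => f w * (W w).imI)
              (fun w => f w * (W w).imJ) (fun w => f w * (W w).imK) q)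
          (fun q => (f q ^ 2)⁻¹ * curl3 (fun w => f w * (W w).imI)
              (fun w => f w * (W w).imJ) (fun w => f w * (W w).imK) q) p = 0 ∧
        curl2 (fun q => (f q ^ 2)⁻¹ * curl1 (fun w => f w * (W w).imI)
              (fun w => f w * (W w).imJ) (fun w => f w * (W w).imK) q)
          (fun q => (f q ^ 2)⁻¹ * curl2 (fun w => f w * (W w).imI)
              (fun w => f w * (W w).imJ) (fun w => f w * (W w).imK) q)
          (fun q => (f q ^ 2)⁻¹ * curl3 (fun w => f w * (W w).imI)
              (fun w => f w * (W w).imJ) (fun w => f w * (W w).imK) q) p = 0 ∧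
        curl3 (fun q => (f q ^ 2)⁻¹ * curl1 (fun w => f w * (W w).imI)
              (fun w => f w * (W w).imJ) (fun w => f w * (W w).imK) q)
          (fun q => (f q ^ 2)⁻¹ * curl2 (fun w => f w * (W w).imI)
              (fun w => f w * (W w).imJ) (fun w => f w * (W w).imK) q)
          (fun q => (f q ^ 2)⁻¹ * curl3 (fun w => f w * (W w).imI)
              (fun w => f w * (W w).imJ) (fun w => f w * (W w).imK) q) p = 0) :=
  fun _ hp =>
  have ⟨hdiv, hrot, hcond, hdouble⟩ :=
    quaternionic_vekua_parts_general hG hf (fun q hq => (hfpos q hq).ne') hW hVek hp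
  ⟨hdiv, ⟨hrot 0, hrot 1, hrot 2⟩, hcond, hdouble 0, hdouble 1, hdouble 2⟩
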